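/- For every real k ≠ 0, as τ → 0+, exp(−k·u*_τ(k)/√τ + Λ_τ(u*_τ(k))/√τ) = exp(−(|k|/√β_t)/√τ + c₀(k)/τ^{1/4} + c₁(k))·τ^{−κθ/(2ξ²)}·c₂(k)·(1 + z₁(k)·τ^{1/4} + O(τ^{1/2})). -/

import Mathlib

open Filter Topology Asymptotics MeasureTheory


noncomputable section


/-- sign convention of the paper: 1 if `0 ≤ x`, -1 otherwise. -/
def sgn' (x : ℝ) : ℝ := if 0 ≤ x then 1 else -1

/-- principal-branch complex square root `d` of the Heston Riccati discriminant. -/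
def hestD (κ ρ ξ : ℝ) (w : ℂ) : ℂ :=
  (((κ : ℂ) - (ρ : ℂ) * (ξ : ℂ) * w) ^ 2 + w * (1 - w) * (ξ : ℂ) ^ 2) ^ ((1 : ℂ) / 2)

def hestGamma (κ ρ ξ : ℝ) (w : ℂ) : ℂ :=
  ((κ : ℂ) - (ρ : ℂ) * (ξ : ℂ) * w - hestD κ ρ ξ w) /
    ((κ : ℂ) - (ρ : ℂ) * (ξ : ℂ) * w + hestD κ ρ ξ w)

def hestB (κ ρ ξ : ℝ) (w : ℂ) (τ : ℝ) : ℂ :=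
  (((κ : ℂ) - (ρ : ℂ) * (ξ : ℂ) * w - hestD κ ρ ξ w) / (ξ : ℂ) ^ 2) *
    ((1 - Complex.exp (-(hestD κ ρ ξ w) * (τ : ℂ))) /
      (1 - hestGamma κ ρ ξ w * Complex.exp (-(hestD κ ρ ξ w) * (τ : ℂ))))

def hestA (κ θ ρ ξ : ℝ) (w : ℂ) (τ : ℝ) : ℂ :=
  ((κ * θ / ξ ^ 2 : ℝ) : ℂ) *
    (((κ : ℂ) - (ρ : ℂ) * (ξ : ℂ) * w - hestD κ ρ ξ w) * (τ : ℂ) -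
      2 * Complex.log ((1 - hestGamma κ ρ ξ w * Complex.exp (-(hestD κ ρ ξ w) * (τ : ℂ))) /
        (1 - hestGamma κ ρ ξ w)))

def betaT (κ ξ t : ℝ) : ℝ := ξ ^ 2 * (1 - Real.exp (-(κ * t))) / (4 * κ)

/-- explicit Heston forward log-mgf `G_τ(w)`. -/
def hestG (κ θ ξ v ρ t : ℝ) (w : ℂ) (τ : ℝ) : ℂ :=
  hestA κ θ ρ ξ w τ +
    hestB κ ρ ξ w τ * (v : ℂ) * ((Real.exp (-(κ * t)) : ℝ) : ℂ) /
      (1 - 2 * (betaT κ ξ t : ℂ) * hestB κ ρ ξ w τ) -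
    ((2 * κ * θ / ξ ^ 2 : ℝ) : ℂ) *
      Complex.log (1 - 2 * (betaT κ ξ t : ℂ) * hestB κ ρ ξ w τ)

/-- rescaled forward log-mgf, for complex argument. -/
def hestLambdaC (κ θ ξ v ρ t τ : ℝ) (z : ℂ) : ℂ :=
  ((Real.sqrt τ : ℝ) : ℂ) * hestG κ θ ξ v ρ t (z / ((Real.sqrt τ : ℝ) : ℂ)) τ

/-- rescaled forward log-mgf `Λ_τ(u) = √τ · G_τ(u/√τ)`. -/
def hestLambda (κ θ ξ v ρ t τ : ℝ) (u : ℝ) : ℂ :=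
  hestLambdaC κ θ ξ v ρ t τ (u : ℂ)

/-- `D_{t,τ}`: the maximal open interval containing `0` on which `Λ_τ` is real-valued. -/
def hestDom (κ θ ξ v ρ t τ : ℝ) : Set ℝ :=
  connectedComponentIn (interior {u : ℝ | (hestLambda κ θ ξ v ρ t τ u).im = 0}) 0



def B1hat (ρ ξ u : ℝ) : ℝ := u / 4 * (u ^ 2 * ρ * ξ - 2)
/-- the derivative of `B1hat` in `u`. -/
def B1hat' (ρ ξ u : ℝ) : ℝ := (3 * u ^ 2 * ρ * ξ - 2) / 4

def coefA0 (κ θ ξ v ρ t k : ℝ) : ℝ := sgn' k / Real.sqrt (betaT κ ξ t)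

def coefA1 (κ θ ξ v ρ t k : ℝ) : ℝ :=
  -(coefA0 κ θ ξ v ρ t k) * Real.sqrt v * Real.exp (-(κ * t) / 2) /
    (2 * Real.sqrt |k| * betaT κ ξ t ^ ((1 : ℝ) / 4))

def coefA2 (κ θ ξ v ρ t k : ℝ) : ℝ :=
  -(κ * θ) / (k * ξ ^ 2) - B1hat ρ ξ (coefA0 κ θ ξ v ρ t k) / coefA0 κ θ ξ v ρ t k

def coefA3 (κ θ ξ v ρ t k : ℝ) : ℝ :=
  (2 * betaT κ ξ t * coefA1 κ θ ξ v ρ t k ^ 3 / (ξ ^ 4 * v ^ 2)) *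
    (ξ ^ 2 * v * betaT κ ξ t * Real.exp (κ * t) *
        (|k| * ξ ^ 2 * Real.sqrt (betaT κ ξ t) * B1hat ρ ξ (coefA0 κ θ ξ v ρ t k) -
          k * ξ ^ 2 * B1hat' ρ ξ (coefA0 κ θ ξ v ρ t k) - κ * θ) +
      (2 * κ * θ * betaT κ ξ t * Real.exp (κ * t)) ^ 2 - ξ ^ 4 * v ^ 2 / 16)

def coefE0 (κ θ ξ v ρ t k : ℝ) : ℝ := -2 * coefA1 κ θ ξ v ρ t k / coefA0 κ θ ξ v ρ t k

def coefR (κ θ ξ v ρ t k : ℝ) : ℝ :=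
  coefA1 κ θ ξ v ρ t k ^ 2 / 2 - κ * θ / (|k| * ξ ^ 2 * Real.sqrt (betaT κ ξ t))

def coefE1 (κ θ ξ v ρ t k : ℝ) : ℝ := -2 * betaT κ ξ t * coefR κ θ ξ v ρ t k

def coefE2 (κ θ ξ v ρ t k : ℝ) : ℝ :=
  -2 * betaT κ ξ t *
    (coefA1 κ θ ξ v ρ t k * coefA2 κ θ ξ v ρ t k + coefA0 κ θ ξ v ρ t k * coefA3 κ θ ξ v ρ t k +
      coefA1 κ θ ξ v ρ t k * B1hat' ρ ξ (coefA0 κ θ ξ v ρ t k))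

def coefZeta (κ θ ξ v ρ t k : ℝ) : ℝ :=
  2 * Real.sqrt v * Real.exp (-(κ * t) / 2) / coefE0 κ θ ξ v ρ t k ^ ((3 : ℝ) / 2)

def coefPsi0 (κ θ ξ v ρ t k : ℝ) : ℝ :=
  (coefA0 κ θ ξ v ρ t k * v * Real.exp (-(κ * t)) / coefE0 κ θ ξ v ρ t k ^ 3) *
    (coefE0 κ θ ξ v ρ t k ^ 2 +
      coefA0 κ θ ξ v ρ t k * betaT κ ξ t *
        (3 * coefA1 κ θ ξ v ρ t k * coefE0 κ θ ξ v ρ t k -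
          2 * coefA0 κ θ ξ v ρ t k * coefE1 κ θ ξ v ρ t k))

def coefPsi1 (κ θ ξ v ρ t k : ℝ) : ℝ :=
  -4 * coefA0 κ θ ξ v ρ t k * v * betaT κ ξ t * Real.exp (-(κ * t)) / coefE0 κ θ ξ v ρ t k ^ 4

def coefPsi2 (κ θ ξ v ρ t k : ℝ) : ℝ :=
  (v * Real.exp (-(κ * t)) / (2 * coefE0 κ θ ξ v ρ t k ^ 4)) *
    (4 * coefA0 κ θ ξ v ρ t k * betaT κ ξ t *
        (3 * coefA0 κ θ ξ v ρ t k * coefE1 κ θ ξ v ρ t k -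
          4 * coefA1 κ θ ξ v ρ t k * coefE0 κ θ ξ v ρ t k) -
      5 * coefE0 κ θ ξ v ρ t k ^ 2)

def coefPsi3 (κ θ ξ v ρ t k : ℝ) : ℝ :=
  8 * v * betaT κ ξ t * Real.exp (-(κ * t)) / coefE0 κ θ ξ v ρ t k ^ 5

def coefPsi4 (κ θ ξ v ρ t k : ℝ) : ℝ :=
  (v * Real.exp (-(κ * t)) / (2 * coefE0 κ θ ξ v ρ t k ^ 3)) *
    ((coefE1 κ θ ξ v ρ t k ^ 2 - coefE0 κ θ ξ v ρ t k * coefE2 κ θ ξ v ρ t k) / betaT κ ξ t -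
      2 * coefA0 κ θ ξ v ρ t k * coefA1 κ θ ξ v ρ t k * coefE0 κ θ ξ v ρ t k *
        coefE1 κ θ ξ v ρ t k +
      2 * coefE0 κ θ ξ v ρ t k ^ 2 * coefR κ θ ξ v ρ t k)

def coefPhi2a (κ θ ξ v ρ t k : ℝ) : ℝ :=
  coefPsi2 κ θ ξ v ρ t k - coefPsi0 κ θ ξ v ρ t k ^ 2 / 2 -
    (4 * κ * θ * betaT κ ξ t / ξ ^ 2) * (2 * κ * θ + ξ ^ 2) / (coefE0 κ θ ξ v ρ t k ^ 2 * ξ ^ 2) -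
    (4 * κ * θ * betaT κ ξ t / ξ ^ 2) *
      (coefA0 κ θ ξ v ρ t k * coefPsi0 κ θ ξ v ρ t k / coefE0 κ θ ξ v ρ t k)

def coefPhi2b (κ θ ξ v ρ t k : ℝ) : ℝ :=
  coefPsi3 κ θ ξ v ρ t k - coefPsi0 κ θ ξ v ρ t k * coefPsi1 κ θ ξ v ρ t k -
    (4 * κ * θ * betaT κ ξ t / ξ ^ 2) *
      (coefA0 κ θ ξ v ρ t k * coefPsi1 κ θ ξ v ρ t k / coefE0 κ θ ξ v ρ t k)

def coefPhi2c (κ θ ξ v ρ t k : ℝ) : ℝ := -(coefPsi1 κ θ ξ v ρ t k ^ 2) / 2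

def coefC0 (κ θ ξ v ρ t k : ℝ) : ℝ := 2 * |coefA1 κ θ ξ v ρ t k * k|

def coefC1 (κ θ ξ v ρ t k : ℝ) : ℝ :=
  (v * Real.exp (-(κ * t)) / coefE0 κ θ ξ v ρ t k) *
      (coefA0 κ θ ξ v ρ t k * coefA1 κ θ ξ v ρ t k -
        coefE1 κ θ ξ v ρ t k / (2 * betaT κ ξ t * coefE0 κ θ ξ v ρ t k)) -
    coefA2 κ θ ξ v ρ t k * k

def coefC2 (κ θ ξ v ρ t k : ℝ) : ℝ := coefE0 κ θ ξ v ρ t k ^ (-(2 * κ * θ / ξ ^ 2))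

def coefZ1 (κ θ ξ v ρ t k : ℝ) : ℝ :=
  coefPsi4 κ θ ξ v ρ t k - coefA3 κ θ ξ v ρ t k * k -
    (2 * κ * θ / ξ ^ 2) * (coefE1 κ θ ξ v ρ t k / coefE0 κ θ ξ v ρ t k)

def coefP1 (κ θ ξ v ρ t k : ℝ) : ℝ :=
  coefE0 κ θ ξ v ρ t k + coefPhi2a κ θ ξ v ρ t k / coefZeta κ θ ξ v ρ t k ^ 2 +
    3 * coefPhi2b κ θ ξ v ρ t k / coefZeta κ θ ξ v ρ t k ^ 4 +
    15 * coefPhi2c κ θ ξ v ρ t k / coefZeta κ θ ξ v ρ t k ^ 6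

def phi1C (κ θ ξ v ρ t k u : ℝ) : ℂ :=
  Complex.I * (u : ℂ) *
      ((coefPsi0 κ θ ξ v ρ t k +
          4 * coefA0 κ θ ξ v ρ t k * κ * θ * betaT κ ξ t / (coefE0 κ θ ξ v ρ t k * ξ ^ 2) : ℝ) : ℂ) +
    Complex.I * (u : ℂ) ^ 3 * ((coefPsi1 κ θ ξ v ρ t k : ℝ) : ℂ)

def phi2R (κ θ ξ v ρ t k u : ℝ) : ℝ :=
  u ^ 2 * coefPhi2a κ θ ξ v ρ t k + u ^ 4 * coefPhi2b κ θ ξ v ρ t k +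
    u ^ 6 * coefPhi2c κ θ ξ v ρ t k

/-!
In the variables `e = √τ` and `u`, the forward log-mgf extends analytically across `e = 0`, because
the square root `d` enters only through even functions: `A = O(e)` and
`B = u² / 2 + e B̂₁(u) + O(e²)`. Since `Λ_τ` is real near `u*_τ`, the logarithm forces
`1 - 2 β_t B > 0` there, so `u*_τ` is bounded and satisfies the equation obtained by differentiating
the analytic formula. That equation makes `1 - 2 β_t B` of order `s = τ^{1/4}`; for
`η = (1 - 2 β_t B) / s` the pair `(u, η)` solves a polynomial system in `s` up to high order in `s`.
The coefficients `aᵢ`, `eᵢ` solve the same system formally, and its linearization at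
`(a₀, e₀)` is nondegenerate, so the difference of two approximate solutions is as small as their
defects. Substituting the resulting expansions of `u` and `η` into the exponent gives the theorem.
-/

/-- `BoundedAlong l f` says that `f` is bounded near the filter `l`. It is a separate predicate,
rather than `f =O[l] 1`, so that `fun_prop` can prove it for polynomial expressions in bounded
functions. -/
@[fun_prop]
def BoundedAlong {α 𝕜 : Type*} [NormedField 𝕜] (l : Filter α) (f : α → 𝕜) : Prop :=
  f =O[l] fun _ => (1 : ℝ)

namespace BoundedAlong

variable {α 𝕜 F : Type*} [NormedField 𝕜] [SeminormedAddCommGroup F] {l : Filter α} {f g : α → 𝕜}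
  {φ : α → F}

@[fun_prop]
theorem const (c : 𝕜) : BoundedAlong l fun _ => c :=
  isBigO_const_const c one_ne_zero l

@[fun_prop]
theorem add (hf : BoundedAlong l f) (hg : BoundedAlong l g) : BoundedAlong l fun x => f x + g x :=
  IsBigO.add hf hg

@[fun_prop]
theorem sub (hf : BoundedAlong l f) (hg : BoundedAlong l g) : BoundedAlong l fun x => f x - g x :=
  IsBigO.sub hf hg

@[fun_prop]
theorem neg (hf : BoundedAlong l f) : BoundedAlong l fun x => -f x :=
  IsBigO.neg_left hf

theorem mul_isBigO (hf : BoundedAlong l f) (hg : g =O[l] φ) : (fun x => f x * g x) =O[l] φ :=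
  .of_norm_right (by simpa only [one_mul] using IsBigO.mul hf hg.norm_right)

@[fun_prop]
theorem mul (hf : BoundedAlong l f) (hg : BoundedAlong l g) : BoundedAlong l fun x => f x * g x :=
  hf.mul_isBigO hg

@[fun_prop]
theorem pow (hf : BoundedAlong l f) (n : ℕ) : BoundedAlong l fun x => f x ^ n := by
  simpa only [BoundedAlong, one_pow] using IsBigO.pow hf n

@[fun_prop]
theorem div_const (hf : BoundedAlong l f) (c : 𝕜) : BoundedAlong l fun x => f x / c := by
  simpa only [div_eq_mul_inv] using hf.mul (const c⁻¹)

theorem of_tendsto {a : 𝕜} (hf : Tendsto f l (𝓝 a)) : BoundedAlong l f :=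
  hf.isBigO_one ℝ

theorem of_eventually_norm_le {C : ℝ} (h : ∀ᶠ x in l, ‖f x‖ ≤ C) : BoundedAlong l f :=
  IsBigO.of_bound C (by simpa only [norm_one, mul_one] using h)

theorem congr' (hf : BoundedAlong l f) (h : f =ᶠ[l] g) : BoundedAlong l g :=
  IsBigO.congr' hf h .rfl

theorem mul_tendsto_zero (hf : BoundedAlong l f) (hg : Tendsto g l (𝓝 0)) :
    Tendsto (fun x => f x * g x) l (𝓝 0) :=
  (isLittleO_one_iff ℝ).1 <| by
    simpa only [one_mul] using IsBigO.mul_isLittleO hf ((isLittleO_one_iff ℝ).2 hg)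

end BoundedAlong

section GeneralLemmas

variable {α 𝕜 : Type*} {l : Filter α}

theorem isBigO_pow_succ [NormedField 𝕜] {s : α → 𝕜} (hs : Tendsto s l (𝓝 0)) (n : ℕ) :
    (fun x => s x ^ (n + 1)) =O[l] fun x => s x ^ n := by
  simpa only [pow_succ'] using
    (BoundedAlong.of_tendsto hs).mul_isBigO (isBigO_refl (fun x => s x ^ n) l)

theorem isBigO_sq_self [NormedField 𝕜] {s : α → 𝕜} (hs : Tendsto s l (𝓝 0)) :
    (fun x => s x ^ 2) =O[l] s := by
  simpa only [pow_one] using isBigO_pow_succ hs 1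

theorem isBigO_comp_sub_linear [NontriviallyNormedField 𝕜] {φ : 𝕜 → 𝕜} {a b : 𝕜} {s η : α → 𝕜}
    (hφ : AnalyticAt 𝕜 φ a) (hs : Tendsto s l (𝓝 0))
    (hη : (fun x => η x - (a + b * s x)) =O[l] fun x => s x ^ 2) :
    (fun x => φ (η x) - (φ a + deriv φ a * b * s x)) =O[l] fun x => s x ^ 2 := by
  obtain ⟨p, hp⟩ := hφ
  have hηa : (fun x => η x - a) =O[l] s := by
    refine ((hη.trans (isBigO_sq_self hs)).add
      ((isBigO_refl s l).const_mul_left b)).congr_left fun x => ?_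
    ring
  have htaylor : (fun x => φ (η x) - (φ a + deriv φ a * (η x - a))) =O[l] fun x => s x ^ 2 := by
    have h := (hp.isBigO_sub_partialSum_pow 2).comp_tendsto (hηa.trans_tendsto hs)
    refine (h.congr_left fun x => ?_).trans (hηa.norm_left.pow 2)
    have hcoeff : p.coeff 0 = φ a := hp.coeff_zero 1
    simp [FormalMultilinearSeries.partialSum, Finset.sum_range_succ, hp.deriv, hcoeff, mul_comm]
  refine (htaylor.add (hη.const_mul_left (deriv φ a))).congr_left fun x => ?_
  ring

theorem tendsto_of_isBigO_sub_quadratic [NormedField 𝕜] {e₀ e₁ e₂ : 𝕜} {s η : α → 𝕜}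
    (hs : Tendsto s l (𝓝 0))
    (hη : (fun x => η x - (e₀ + e₁ * s x + e₂ * s x ^ 2)) =O[l] fun x => s x ^ 3) :
    Tendsto η l (𝓝 e₀) := by
  have hpoly : Tendsto (fun x => e₀ + e₁ * s x + e₂ * s x ^ 2) l (𝓝 (e₀ + e₁ * 0 + e₂ * 0 ^ 2)) :=
    (tendsto_const_nhds.add (hs.const_mul e₁)).add ((hs.pow 2).const_mul e₂)
  have herr := hη.trans_tendsto (by simpa only [zero_pow three_ne_zero] using hs.pow 3)
  simpa using herr.add hpoly

theorem isBigO_inv_sub_quadratic [NormedField 𝕜] {e₀ e₁ e₂ : 𝕜} {s η : α → 𝕜} (he₀ : e₀ ≠ 0)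
    (hs : Tendsto s l (𝓝 0))
    (hη : (fun x => η x - (e₀ + e₁ * s x + e₂ * s x ^ 2)) =O[l] fun x => s x ^ 3) :
    (fun x => (η x)⁻¹ - (1 / e₀ - e₁ / e₀ ^ 2 * s x + (e₁ ^ 2 - e₀ * e₂) / e₀ ^ 3 * s x ^ 2))
      =O[l] fun x => s x ^ 3 := by
  have hlim := tendsto_of_isBigO_sub_quadratic hs hη
  have hs' := BoundedAlong.of_tendsto hs
  have hinv := BoundedAlong.of_tendsto (hlim.inv₀ he₀)
  have hquot : BoundedAlong l fun x =>
      1 / e₀ - e₁ / e₀ ^ 2 * s x + (e₁ ^ 2 - e₀ * e₂) / e₀ ^ 3 * s x ^ 2 := by fun_prop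
  have hpoly : BoundedAlong l fun x => (2 * e₀ * e₁ * e₂ - e₁ ^ 3) / e₀ ^ 3
      - e₂ * (e₁ ^ 2 - e₀ * e₂) / e₀ ^ 3 * s x := by fun_prop
  have hrem := hinv.mul_isBigO
    ((hpoly.mul_isBigO (isBigO_refl (fun x => s x ^ 3) l)).sub (hquot.mul_isBigO hη))
  refine hrem.congr' ?_ .rfl
  filter_upwards [hlim.eventually_ne he₀] with x hx
  field_simp
  ring

/-- The determinant `x z + s y` of the system stays away from `0`. -/
theorem isBigO_of_linear_system [NormedField 𝕜] {s x y z δ ε : α → 𝕜} {x₀ z₀ : 𝕜} {n : ℕ}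
    (hs : Tendsto s l (𝓝 0)) (hx : Tendsto x l (𝓝 x₀)) (hx₀ : x₀ ≠ 0) (hz : Tendsto z l (𝓝 z₀))
    (hz₀ : z₀ ≠ 0) (hy : BoundedAlong l y)
    (h₁ : (fun a => y a * δ a - x a * ε a) =O[l] fun a => s a ^ n)
    (h₂ : (fun a => z a * δ a + s a * ε a) =O[l] fun a => s a ^ (n + 1)) :
    δ =O[l] (fun a => s a ^ (n + 1)) ∧ ε =O[l] fun a => s a ^ n := by
  have hdet : Tendsto (fun a => x a * z a + y a * s a) l (𝓝 (x₀ * z₀)) := by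
    simpa only [add_zero] using (hx.mul hz).add (hy.mul_tendsto_zero hs)
  have hδ : δ =O[l] fun a => s a ^ (n + 1) := by
    have hrhs : (fun a => x a * (z a * δ a + s a * ε a) + s a * (y a * δ a - x a * ε a))
        =O[l] fun a => s a ^ (n + 1) := by
      refine ((BoundedAlong.of_tendsto hx).mul_isBigO h₂).add ?_
      simpa only [pow_succ'] using (isBigO_refl s l).mul h₁
    have hx₀z₀ := mul_ne_zero hx₀ hz₀
    refine ((BoundedAlong.of_tendsto (hdet.inv₀ hx₀z₀)).mul_isBigO hrhs).congr' ?_ .rfl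
    filter_upwards [hdet.eventually_ne hx₀z₀] with a ha
    rw [inv_mul_eq_iff_eq_mul₀ ha]
    ring
  refine ⟨hδ, ?_⟩
  have hδ' : δ =O[l] fun a => s a ^ n := hδ.trans (isBigO_pow_succ hs n)
  refine ((BoundedAlong.of_tendsto (hx.inv₀ hx₀)).mul_isBigO
    ((hy.mul_isBigO hδ').sub h₁)).congr' ?_ .rfl
  filter_upwards [hx.eventually_ne hx₀] with a ha
  rw [inv_mul_eq_iff_eq_mul₀ ha]
  ring

theorem tendsto_sub_abs_zero_of_tendsto_sub {x y : α → ℝ} (hy : ∀ᶠ a in l, 0 ≤ y a)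
    (h : Tendsto (fun a => x a - y a) l (𝓝 0)) : Tendsto (fun a => x a - |x a|) l (𝓝 0) := by
  refine squeeze_zero_norm' (hy.mono fun a ha => ?_) (by simpa using h.abs.const_mul 2)
  calc ‖x a - |x a|‖ = |(x a - y a) - (|x a| - |y a|)| := by
        rw [Real.norm_eq_abs, abs_of_nonneg ha]; congr 1; ring
    _ ≤ |x a - y a| + |(|x a| - |y a|)| := abs_sub _ _
    _ ≤ 2 * |x a - y a| := by linarith [abs_abs_sub_abs_le (x a) (y a)]

theorem eventually_eval_ne_zero {R : Type*} [CommRing R] [IsDomain R] [TopologicalSpace R]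
    [T1Space R] {p : Polynomial R} (hp : p ≠ 0) (a : R) : ∀ᶠ x in 𝓝[≠] a, p.eval x ≠ 0 :=
  nhdsNE_le_cofinite a <| eventually_cofinite.2 <|
    (p.rootSet_finite R).subset fun x hx => by
      rw [Polynomial.mem_rootSet_of_ne hp, Polynomial.coe_aeval_eq_eval]
      exact not_not.1 hx

theorem contDiff_ofScalarsSum [RCLike 𝕜] {c : ℕ → 𝕜} (hc : ∀ n, c n ≠ 0)
    (h : Tendsto (fun n => ‖c n.succ‖ / ‖c n‖) atTop (𝓝 0)) {n : WithTop ℕ∞} :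
    ContDiff 𝕜 n (FormalMultilinearSeries.ofScalarsSum c : 𝕜 → 𝕜) := by
  have hr := FormalMultilinearSeries.ofScalars_radius_eq_top_of_tendsto 𝕜 (c := c)
    (Eventually.of_forall hc) h
  have hball := (FormalMultilinearSeries.ofScalars 𝕜 c).hasFPowerSeriesOnBall
    (hr ▸ ENNReal.zero_lt_top)
  rw [hr] at hball
  exact contDiffOn_univ.1
    (AnalyticOnNhd.contDiffOn (fun x _ => hball.analyticAt_of_mem (by simp)) uniqueDiffOn_univ)

end GeneralLemmas

/-- The Stumpff function `∑ qⁿ / (2n + j)!`, with the sign of `q` chosen so that the cases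
`j = 0, 1` are `cosh √q` and `sinh √q / √q`. They carry the dependence of the Heston transform on
its discriminant, which is entire although the square root `d` is not. -/
def stumpff (j : ℕ) : ℝ → ℝ :=
  FormalMultilinearSeries.ofScalarsSum fun n : ℕ => (1 : ℝ) / (2 * n + j).factorial

section Stumpff

theorem contDiff_stumpff (j : ℕ) {n : WithTop ℕ∞} : ContDiff ℝ n (stumpff j) := by
  refine contDiff_ofScalarsSum (fun n => by positivity) <|
    squeeze_zero (fun n => by positivity) (fun n => ?_) tendsto_one_div_add_atTop_nhds_zero_nat
  have hfac : (n + 1) * (2 * n + j).factorial ≤ (2 * n.succ + j).factorial := by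
    rw [show 2 * n.succ + j = 2 * n + j + 1 + 1 by lia, Nat.factorial_succ (2 * n + j + 1)]
    exact Nat.mul_le_mul (by lia) (Nat.factorial_le (by lia))
  rw [Real.norm_of_nonneg (by positivity), Real.norm_of_nonneg (by positivity),
    div_div_eq_mul_div, div_one, one_div_mul_eq_div,
    div_le_div_iff₀ (by positivity) (by positivity), one_mul, mul_comm]
  exact_mod_cast hfac

theorem differentiable_stumpff (j : ℕ) : Differentiable ℝ (stumpff j) :=
  (contDiff_stumpff j (n := 1)).differentiable one_ne_zero

theorem stumpff_zero_right (j : ℕ) : stumpff j 0 = 1 / j.factorial := by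
  simp [stumpff, FormalMultilinearSeries.ofScalarsSum_zero]

theorem cosh_eq_stumpff {x : ℂ} {q : ℝ} (h : x ^ 2 = q) : Complex.cosh x = stumpff 0 q := by
  rw [Complex.cosh_eq_tsum, stumpff, FormalMultilinearSeries.ofScalars_sum_eq, Complex.ofReal_tsum]
  refine tsum_congr fun n => ?_
  rw [pow_mul, h]
  push_cast [smul_eq_mul, add_zero]
  ring

theorem sinh_eq_mul_stumpff {x : ℂ} {q : ℝ} (h : x ^ 2 = q) :
    Complex.sinh x = x * stumpff 1 q := by
  rw [Complex.sinh_eq_tsum, stumpff, FormalMultilinearSeries.ofScalars_sum_eq, Complex.ofReal_tsum,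
    ← tsum_mul_left]
  refine tsum_congr fun n => ?_
  rw [pow_succ, pow_mul, h]
  push_cast [smul_eq_mul]
  ring

end Stumpff

section RegularRepresentation

/-- Half the drift of the Riccati equation over the maturity, `(κ - ρ ξ w) τ / 2`, in the scaling
`τ = e²`, `w = u / e`. -/
def scaledDrift (κ ξ ρ e u : ℝ) : ℝ := (κ * e ^ 2 - ρ * ξ * u * e) / 2

/-- The source term of the Riccati equation integrated over the maturity, `w (w - 1) τ / 2`, in the
scaling `τ = e²`, `w = u / e`. -/
def scaledSource (e u : ℝ) : ℝ := (u ^ 2 - u * e) / 2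

/-- The argument `(d τ / 2)²` of the Stumpff functions, in the scaling `τ = e²`, `w = u / e`. -/
def scaledDiscr (κ ξ ρ e u : ℝ) : ℝ :=
  scaledDrift κ ξ ρ e u ^ 2 - ξ ^ 2 * e ^ 2 / 2 * scaledSource e u

/-- The common denominator `cosh (d τ / 2) + (κ - ρ ξ w) sinh (d τ / 2) / d` of the Riccati
solution, as an analytic function of `e = √τ` and `u = e w`. -/
def riccatiDenom (κ ξ ρ e u : ℝ) : ℝ :=
  stumpff 0 (scaledDiscr κ ξ ρ e u) + scaledDrift κ ξ ρ e u * stumpff 1 (scaledDiscr κ ξ ρ e u)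

/-- The function `A(u / √τ, τ)` divided by `2 κ θ / ξ²`, as a function of `e = √τ` and `u`. -/
def riccatiA (κ ξ ρ e u : ℝ) : ℝ := scaledDrift κ ξ ρ e u - Real.log (riccatiDenom κ ξ ρ e u)

/-- The function `B(u / √τ, τ)`, as a function of `e = √τ` and `u`. -/
def riccatiB (κ ξ ρ e u : ℝ) : ℝ :=
  scaledSource e u * stumpff 1 (scaledDiscr κ ξ ρ e u) / riccatiDenom κ ξ ρ e u

/-- The quantity `1 - 2 β B`, whose vanishing marks the endpoints of the domain of the forward
log-mgf and which is small at the saddle point. -/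
def momentGap (κ ξ ρ β e u : ℝ) : ℝ := 1 - 2 * β * riccatiB κ ξ ρ e u

/-- Half the degrees of freedom of the noncentral chi-squared law of `V_t / β_t`. -/
def cirHalfDegree (κ θ ξ : ℝ) : ℝ := 2 * κ * θ / ξ ^ 2

/-- Half the noncentrality parameter of the noncentral chi-squared law of `V_t / β_t`. -/
def cirHalfNoncentrality (κ ξ v t : ℝ) : ℝ := v * Real.exp (-(κ * t)) / (2 * betaT κ ξ t)

/-- The forward log-mgf `G_τ(u / √τ)` as a real function of `e = √τ` and `u`, free of the removable
singularities of the defining formula at `d = 0`, `w = 0` and `w = 1`. -/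
def regularG (κ θ ξ v ρ t e u : ℝ) : ℝ :=
  cirHalfDegree κ θ ξ * riccatiA κ ξ ρ e u +
    cirHalfNoncentrality κ ξ v t * (1 / momentGap κ ξ ρ (betaT κ ξ t) e u - 1) -
    cirHalfDegree κ θ ξ * Real.log (momentGap κ ξ ρ (betaT κ ξ t) e u)

section ComplexAlgebra

variable {κ θ ξ ρ τ : ℝ} {w : ℂ}

theorem hestD_sq : hestD κ ρ ξ w ^ 2 = (κ - ρ * ξ * w) ^ 2 + w * (1 - w) * ξ ^ 2 := by
  simpa only [hestD, one_div, Nat.cast_ofNat] using Complex.cpow_nat_inv_pow _ two_ne_zero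

theorem drift_add_hestD_ne_zero (hξ : ξ ≠ 0) (hw₀ : w ≠ 0) (hw₁ : w ≠ 1) :
    (κ : ℂ) - ρ * ξ * w + hestD κ ρ ξ w ≠ 0 := by
  intro h
  have hprod : w * (1 - w) * (ξ : ℂ) ^ 2 = 0 := by
    linear_combination (hestD κ ρ ξ w - (κ - ρ * ξ * w)) * h - hestD_sq (κ := κ) (ξ := ξ)
  have hξ' : (ξ : ℂ) ≠ 0 := by exact_mod_cast hξ
  exact mul_ne_zero (mul_ne_zero hw₀ (sub_ne_zero.2 hw₁.symm)) (pow_ne_zero 2 hξ') hprod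

theorem one_sub_hestGamma (h : (κ : ℂ) - ρ * ξ * w + hestD κ ρ ξ w ≠ 0) :
    1 - hestGamma κ ρ ξ w = 2 * hestD κ ρ ξ w / (κ - ρ * ξ * w + hestD κ ρ ξ w) := by
  rw [hestGamma, one_sub_div h]
  ring

theorem one_add_hestGamma (h : (κ : ℂ) - ρ * ξ * w + hestD κ ρ ξ w ≠ 0) :
    1 + hestGamma κ ρ ξ w = 2 * (κ - ρ * ξ * w) / (κ - ρ * ξ * w + hestD κ ρ ξ w) := by
  rw [hestGamma, one_add_div h]
  ring

theorem one_sub_mul_exp_neg (g z : ℂ) : 1 - g * Complex.exp (-z) =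
    Complex.exp (-(z / 2)) * ((1 - g) * Complex.cosh (z / 2) + (1 + g) * Complex.sinh (z / 2)) := by
  have hsq : Complex.exp (-z) = Complex.exp (-(z / 2)) ^ 2 := by
    rw [← Complex.exp_nat_mul]; ring_nf
  have hinv : Complex.exp (-(z / 2)) * Complex.exp (z / 2) = 1 := by
    rw [← Complex.exp_add, neg_add_cancel, Complex.exp_zero]
  rw [hsq, Complex.cosh, Complex.sinh]
  linear_combination -hinv

theorem one_sub_hestGamma_mul_exp (h : (κ : ℂ) - ρ * ξ * w + hestD κ ρ ξ w ≠ 0) :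
    1 - hestGamma κ ρ ξ w * Complex.exp (-hestD κ ρ ξ w * τ) =
      2 * Complex.exp (-(hestD κ ρ ξ w * τ / 2)) *
        (hestD κ ρ ξ w * Complex.cosh (hestD κ ρ ξ w * τ / 2) +
          (κ - ρ * ξ * w) * Complex.sinh (hestD κ ρ ξ w * τ / 2)) /
        (κ - ρ * ξ * w + hestD κ ρ ξ w) := by
  rw [neg_mul, one_sub_mul_exp_neg, one_sub_hestGamma h, one_add_hestGamma h]
  ring

theorem hestB_eq (hξ : ξ ≠ 0) (h : (κ : ℂ) - ρ * ξ * w + hestD κ ρ ξ w ≠ 0) :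
    hestB κ ρ ξ w τ = w * (w - 1) * Complex.sinh (hestD κ ρ ξ w * τ / 2) /
      (hestD κ ρ ξ w * Complex.cosh (hestD κ ρ ξ w * τ / 2) +
        (κ - ρ * ξ * w) * Complex.sinh (hestD κ ρ ξ w * τ / 2)) := by
  have hnum : 1 - Complex.exp (-hestD κ ρ ξ w * τ) =
      2 * Complex.exp (-(hestD κ ρ ξ w * τ / 2)) * Complex.sinh (hestD κ ρ ξ w * τ / 2) := by
    rw [neg_mul, ← one_mul (Complex.exp (-(_ * _))), one_sub_mul_exp_neg]
    ring
  have hprod : ((κ : ℂ) - ρ * ξ * w - hestD κ ρ ξ w) * (κ - ρ * ξ * w + hestD κ ρ ξ w) =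
      w * (w - 1) * (ξ : ℂ) ^ 2 := by
    linear_combination -hestD_sq (κ := κ) (ξ := ξ) (ρ := ρ) (w := w)
  have hξ' : (ξ : ℂ) ≠ 0 := by exact_mod_cast hξ
  have hexp := Complex.exp_ne_zero (-(hestD κ ρ ξ w * τ / 2))
  rw [hestB, one_sub_hestGamma_mul_exp h, hnum]
  generalize hestD κ ρ ξ w * Complex.cosh _ + (κ - ρ * ξ * w) * Complex.sinh _ = Δ
  generalize hestD κ ρ ξ w * τ / 2 = x at *
  field_simp
  linear_combination Complex.sinh x / Δ * hprod

theorem hestA_eq (h : (κ : ℂ) - ρ * ξ * w + hestD κ ρ ξ w ≠ 0) (hD : hestD κ ρ ξ w ≠ 0) :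
    hestA κ θ ρ ξ w τ = ((κ * θ / ξ ^ 2 : ℝ) : ℂ) *
      ((κ - ρ * ξ * w - hestD κ ρ ξ w) * τ - 2 * Complex.log
        (Complex.exp (-(hestD κ ρ ξ w * τ / 2)) *
          (Complex.cosh (hestD κ ρ ξ w * τ / 2) +
            (κ - ρ * ξ * w) * Complex.sinh (hestD κ ρ ξ w * τ / 2) / hestD κ ρ ξ w))) := by
  rw [hestA, one_sub_hestGamma_mul_exp h, one_sub_hestGamma h]
  congr 4
  field_simp

end ComplexAlgebra

variable {κ θ ξ v ρ t e w u : ℝ}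

theorem hestD_mul_sq_eq_scaledDiscr :
    (hestD κ ρ ξ w * ((e ^ 2 : ℝ) : ℂ) / 2) ^ 2 = scaledDiscr κ ξ ρ e (w * e) := by
  rw [div_pow, mul_pow, hestD_sq, scaledDiscr, scaledDrift, scaledSource]
  push_cast
  ring

theorem hestD_ne_zero (hQ : scaledDiscr κ ξ ρ e (w * e) ≠ 0) : hestD κ ρ ξ w ≠ 0 := by
  intro h
  have hsq := hestD_mul_sq_eq_scaledDiscr (κ := κ) (ξ := ξ) (ρ := ρ) (e := e) (w := w)
  rw [h, zero_mul, zero_div, zero_pow two_ne_zero] at hsq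
  exact hQ (by exact_mod_cast hsq.symm)

theorem drift_add_hestD_ne_zero_of_scaledSource (hξ : ξ ≠ 0) (hN : scaledSource e (w * e) ≠ 0) :
    (κ : ℂ) - ρ * ξ * w + hestD κ ρ ξ w ≠ 0 := by
  have hN' : w * (w - 1) ≠ 0 := fun h => hN <| by
    rw [scaledSource]
    linear_combination e ^ 2 / 2 * h
  refine drift_add_hestD_ne_zero hξ (by exact_mod_cast left_ne_zero_of_mul hN') ?_
  exact_mod_cast sub_ne_zero.1 (right_ne_zero_of_mul hN')

theorem ofReal_riccatiDenom : ((riccatiDenom κ ξ ρ e (w * e) : ℝ) : ℂ) =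
    Complex.cosh (hestD κ ρ ξ w * ((e ^ 2 : ℝ) : ℂ) / 2) +
      (κ - ρ * ξ * w) * ((e ^ 2 : ℝ) : ℂ) / 2 * stumpff 1 (scaledDiscr κ ξ ρ e (w * e)) := by
  rw [cosh_eq_stumpff hestD_mul_sq_eq_scaledDiscr, riccatiDenom, scaledDrift]
  push_cast
  ring

theorem hestB_eq_riccatiB (hξ : ξ ≠ 0) (hQ : scaledDiscr κ ξ ρ e (w * e) ≠ 0)
    (hN : scaledSource e (w * e) ≠ 0) :
    hestB κ ρ ξ w (e ^ 2) = riccatiB κ ξ ρ e (w * e) := by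
  have hD := hestD_ne_zero hQ
  rw [hestB_eq hξ (drift_add_hestD_ne_zero_of_scaledSource hξ hN), riccatiB, Complex.ofReal_div,
    ofReal_riccatiDenom, sinh_eq_mul_stumpff hestD_mul_sq_eq_scaledDiscr, scaledSource]
  refine Eq.trans ?_ (mul_div_mul_left _ _ hD)
  congr 1 <;> push_cast <;> ring

theorem log_exp_neg_mul_ofReal {z : ℂ} {c : ℝ} (hz : ‖z‖ < 1) (hc : 0 < c) :
    Complex.log (Complex.exp (-z) * c) = Real.log c - z := by
  have him : |(-z).im| < Real.pi :=
    ((Complex.abs_im_le_norm _).trans_lt (by rwa [norm_neg])).trans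
      (by linarith [Real.pi_gt_three])
  rw [mul_comm, Complex.log_ofReal_mul hc (Complex.exp_ne_zero _),
    Complex.log_exp (abs_lt.1 him).1 (abs_lt.1 him).2.le, ← sub_eq_add_neg]

theorem hestA_eq_riccatiA (hξ : ξ ≠ 0) (hQ : scaledDiscr κ ξ ρ e (w * e) ≠ 0)
    (hQ₁ : |scaledDiscr κ ξ ρ e (w * e)| < 1) (hN : scaledSource e (w * e) ≠ 0)
    (hC : 0 < riccatiDenom κ ξ ρ e (w * e)) :
    hestA κ θ ρ ξ w (e ^ 2) = ((cirHalfDegree κ θ ξ * riccatiA κ ξ ρ e (w * e) : ℝ) : ℂ) := by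
  have hD := hestD_ne_zero hQ
  have hx := hestD_mul_sq_eq_scaledDiscr (κ := κ) (ξ := ξ) (ρ := ρ) (e := e) (w := w)
  have hnorm : ‖hestD κ ρ ξ w * ((e ^ 2 : ℝ) : ℂ) / 2‖ < 1 := by
    refine (sq_lt_one_iff₀ (norm_nonneg _)).1 ?_
    rwa [← norm_pow, hx, Complex.norm_real]
  have hdenom : Complex.cosh (hestD κ ρ ξ w * ((e ^ 2 : ℝ) : ℂ) / 2) + (κ - ρ * ξ * w) *
      Complex.sinh (hestD κ ρ ξ w * ((e ^ 2 : ℝ) : ℂ) / 2) / hestD κ ρ ξ w =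
      riccatiDenom κ ξ ρ e (w * e) := by
    rw [ofReal_riccatiDenom, sinh_eq_mul_stumpff hx]
    field_simp
  rw [hestA_eq (drift_add_hestD_ne_zero_of_scaledSource hξ hN) hD, hdenom,
    log_exp_neg_mul_ofReal hnorm hC, cirHalfDegree, riccatiA, scaledDrift]
  push_cast
  ring

/-- Junk values make the defining formula of `hestLambda` fail at `d = 0`, `w = 0` and `w = 1`. -/
theorem hestLambda_eq (hξ : ξ ≠ 0) (hβ : betaT κ ξ t ≠ 0) {τ : ℝ} (hτ : 0 < τ)
    (hQ : scaledDiscr κ ξ ρ √τ u ≠ 0) (hQ₁ : |scaledDiscr κ ξ ρ √τ u| < 1)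
    (hN : scaledSource √τ u ≠ 0) (hC : 0 < riccatiDenom κ ξ ρ √τ u)
    (hH : momentGap κ ξ ρ (betaT κ ξ t) √τ u ≠ 0) :
    hestLambda κ θ ξ v ρ t τ u = √τ *
      ((cirHalfDegree κ θ ξ * riccatiA κ ξ ρ √τ u + cirHalfNoncentrality κ ξ v t *
          (1 / momentGap κ ξ ρ (betaT κ ξ t) √τ u - 1) : ℝ) -
        cirHalfDegree κ θ ξ * Complex.log (momentGap κ ξ ρ (betaT κ ξ t) √τ u)) := by
  have hu : u = u / √τ * √τ := (div_mul_cancel₀ u (Real.sqrt_pos.2 hτ).ne').symm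
  have hβ' : (betaT κ ξ t : ℂ) ≠ 0 := by exact_mod_cast hβ
  have hgap : 1 - 2 * (betaT κ ξ t : ℂ) * riccatiB κ ξ ρ √τ u =
      momentGap κ ξ ρ (betaT κ ξ t) √τ u := by rw [momentGap]; push_cast; rfl
  have hH' : (momentGap κ ξ ρ (betaT κ ξ t) √τ u : ℂ) ≠ 0 := by exact_mod_cast hH
  have hA : hestA κ θ ρ ξ ((u / √τ : ℝ) : ℂ) τ =
      ((cirHalfDegree κ θ ξ * riccatiA κ ξ ρ √τ u : ℝ) : ℂ) := by
    rw [hu] at hQ hQ₁ hN hC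
    conv_rhs => rw [hu]
    rw [← hestA_eq_riccatiA hξ hQ hQ₁ hN hC, Real.sq_sqrt hτ.le]
  have hB : hestB κ ρ ξ ((u / √τ : ℝ) : ℂ) τ = riccatiB κ ξ ρ √τ u := by
    rw [hu] at hQ hN
    conv_rhs => rw [hu]
    rw [← hestB_eq_riccatiB hξ hQ hN, Real.sq_sqrt hτ.le]
  have hfrac : (riccatiB κ ξ ρ √τ u : ℂ) * v * (Real.exp (-(κ * t)) : ℝ) /
      momentGap κ ξ ρ (betaT κ ξ t) √τ u = (cirHalfNoncentrality κ ξ v t *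
        (1 / momentGap κ ξ ρ (betaT κ ξ t) √τ u - 1) : ℝ) := by
    rw [cirHalfNoncentrality]
    push_cast
    field_simp
    linear_combination -(v : ℂ) * hgap
  rw [hestLambda, hestLambdaC, ← Complex.ofReal_div, hestG, hA, hB, hgap, hfrac, cirHalfDegree]
  push_cast
  ring

end RegularRepresentation

section Derivatives

variable {κ θ ξ v ρ β t e u : ℝ}

theorem hasDerivAt_scaledDrift : HasDerivAt (scaledDrift κ ξ ρ e) (-(ρ * ξ * e) / 2) u := by
  have h := ((((hasDerivAt_id u).const_mul (ρ * ξ)).mul_const e).const_sub (κ * e ^ 2)).div_const 2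
  exact h.congr_deriv (by rw [mul_one])

theorem hasDerivAt_scaledSource : HasDerivAt (scaledSource e) (u - e / 2) u := by
  have h := (((hasDerivAt_id u).fun_pow 2).sub ((hasDerivAt_id u).mul_const e)).div_const 2
  refine h.congr_deriv ?_
  simp only [id_eq]
  ring

theorem hasDerivAt_scaledDiscr : HasDerivAt (scaledDiscr κ ξ ρ e)
    (-(ρ * ξ * e) * scaledDrift κ ξ ρ e u - ξ ^ 2 * e ^ 2 / 2 * (u - e / 2)) u := by
  have hdrift : HasDerivAt (fun y => scaledDrift κ ξ ρ e y ^ 2) _ u :=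
    hasDerivAt_scaledDrift.fun_pow 2
  refine (hdrift.sub (hasDerivAt_scaledSource.const_mul (ξ ^ 2 * e ^ 2 / 2))).congr_deriv ?_
  ring

theorem hasDerivAt_stumpff_scaledDiscr (j : ℕ) :
    HasDerivAt (fun y => stumpff j (scaledDiscr κ ξ ρ e y))
      (deriv (stumpff j) (scaledDiscr κ ξ ρ e u) * deriv (scaledDiscr κ ξ ρ e) u) u :=
  (differentiable_stumpff j _).hasDerivAt.comp u
    hasDerivAt_scaledDiscr.differentiableAt.hasDerivAt

theorem hasDerivAt_riccatiDenom : HasDerivAt (riccatiDenom κ ξ ρ e)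
    (deriv (stumpff 0) (scaledDiscr κ ξ ρ e u) * deriv (scaledDiscr κ ξ ρ e) u +
      (-(ρ * ξ * e) / 2 * stumpff 1 (scaledDiscr κ ξ ρ e u) + scaledDrift κ ξ ρ e u *
        (deriv (stumpff 1) (scaledDiscr κ ξ ρ e u) * deriv (scaledDiscr κ ξ ρ e) u))) u :=
  (hasDerivAt_stumpff_scaledDiscr 0).add
    (hasDerivAt_scaledDrift.mul (hasDerivAt_stumpff_scaledDiscr 1))

theorem hasDerivAt_riccatiA (hC : riccatiDenom κ ξ ρ e u ≠ 0) :
    HasDerivAt (riccatiA κ ξ ρ e)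
      (-(ρ * ξ * e) / 2 - deriv (riccatiDenom κ ξ ρ e) u / riccatiDenom κ ξ ρ e u) u :=
  hasDerivAt_scaledDrift.sub (hasDerivAt_riccatiDenom.differentiableAt.hasDerivAt.log hC)

theorem hasDerivAt_riccatiB (hC : riccatiDenom κ ξ ρ e u ≠ 0) :
    HasDerivAt (riccatiB κ ξ ρ e)
      (((u - e / 2) * stumpff 1 (scaledDiscr κ ξ ρ e u) + scaledSource e u *
          (deriv (stumpff 1) (scaledDiscr κ ξ ρ e u) * deriv (scaledDiscr κ ξ ρ e) u) -
        riccatiB κ ξ ρ e u * deriv (riccatiDenom κ ξ ρ e) u) / riccatiDenom κ ξ ρ e u) u := by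
  have hnum : HasDerivAt (fun y => scaledSource e y * stumpff 1 (scaledDiscr κ ξ ρ e y)) _ u :=
    hasDerivAt_scaledSource.mul (hasDerivAt_stumpff_scaledDiscr 1)
  have h := hnum.div hasDerivAt_riccatiDenom.differentiableAt.hasDerivAt hC
  refine h.congr_deriv ?_
  rw [riccatiB]
  field_simp

theorem hasDerivAt_momentGap (hC : riccatiDenom κ ξ ρ e u ≠ 0) :
    HasDerivAt (momentGap κ ξ ρ β e) (-(2 * β * deriv (riccatiB κ ξ ρ e) u)) u :=
  ((hasDerivAt_riccatiB hC).differentiableAt.hasDerivAt.const_mul (2 * β)).const_sub 1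

theorem hasDerivAt_regularG (hC : riccatiDenom κ ξ ρ e u ≠ 0)
    (hH : momentGap κ ξ ρ (betaT κ ξ t) e u ≠ 0) :
    HasDerivAt (regularG κ θ ξ v ρ t e)
      (cirHalfDegree κ θ ξ * deriv (riccatiA κ ξ ρ e) u -
        cirHalfNoncentrality κ ξ v t * deriv (momentGap κ ξ ρ (betaT κ ξ t) e) u /
          momentGap κ ξ ρ (betaT κ ξ t) e u ^ 2 -
        cirHalfDegree κ θ ξ * deriv (momentGap κ ξ ρ (betaT κ ξ t) e) u /
          momentGap κ ξ ρ (betaT κ ξ t) e u) u := by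
  have hH' := (hasDerivAt_momentGap hC (β := betaT κ ξ t)).differentiableAt.hasDerivAt
  have hA := (hasDerivAt_riccatiA hC).differentiableAt.hasDerivAt
  have h := ((hA.const_mul (cirHalfDegree κ θ ξ)).add
    ((((hasDerivAt_const u 1).div hH' hH).sub_const 1).const_mul
      (cirHalfNoncentrality κ ξ v t))).sub ((hH'.log hH).const_mul (cirHalfDegree κ θ ξ))
  refine h.congr_deriv ?_
  ring

end Derivatives

section CriticalPoint

variable {κ θ ξ v ρ t τ u₀ k : ℝ}

theorem eventually_scaledDiscr_ne_zero_and_scaledSource_ne_zero {e : ℝ} (hκ : κ ≠ 0) (he : e ≠ 0) :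
    ∀ᶠ u in 𝓝[≠] u₀, scaledDiscr κ ξ ρ e u ≠ 0 ∧ scaledSource e u ≠ 0 := by
  have hQ : (Polynomial.C (κ * e ^ 2) - Polynomial.C (ρ * ξ * e) * Polynomial.X) ^ 2 -
      Polynomial.C (ξ ^ 2 * e ^ 2) * (Polynomial.X ^ 2 - Polynomial.C e * Polynomial.X) ≠ 0 := by
    intro h
    simpa [hκ, he] using congrArg (Polynomial.eval 0) h
  have hN : Polynomial.X * (Polynomial.X - Polynomial.C e) ≠ 0 :=
    mul_ne_zero Polynomial.X_ne_zero (Polynomial.X_sub_C_ne_zero e)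
  filter_upwards [eventually_eval_ne_zero hQ u₀, eventually_eval_ne_zero hN u₀] with u hQu hNu
  simp only [Polynomial.eval_sub, Polynomial.eval_mul, Polynomial.eval_pow, Polynomial.eval_C,
    Polynomial.eval_X] at hQu hNu
  constructor
  · contrapose! hQu
    rw [scaledDiscr, scaledDrift, scaledSource] at hQu
    linear_combination 4 * hQu
  · contrapose! hNu
    rw [scaledSource] at hNu
    linear_combination 2 * hNu

theorem eventually_hestLambda_eq (hκ : κ ≠ 0) (hξ : ξ ≠ 0) (hβ : betaT κ ξ t ≠ 0) (hτ : 0 < τ)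
    (hQ : |scaledDiscr κ ξ ρ √τ u₀| < 1) (hC : 0 < riccatiDenom κ ξ ρ √τ u₀) :
    ∀ᶠ u in 𝓝[≠] u₀, momentGap κ ξ ρ (betaT κ ξ t) √τ u ≠ 0 →
      hestLambda κ θ ξ v ρ t τ u = √τ *
        ((cirHalfDegree κ θ ξ * riccatiA κ ξ ρ √τ u + cirHalfNoncentrality κ ξ v t *
            (1 / momentGap κ ξ ρ (betaT κ ξ t) √τ u - 1) : ℝ) -
          cirHalfDegree κ θ ξ * Complex.log (momentGap κ ξ ρ (betaT κ ξ t) √τ u)) := by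
  have hQ' := hasDerivAt_scaledDiscr.continuousAt.abs.eventually (gt_mem_nhds hQ)
  have hC' := hasDerivAt_riccatiDenom.continuousAt.eventually (lt_mem_nhds hC)
  filter_upwards [nhdsWithin_le_nhds hQ', nhdsWithin_le_nhds hC',
    eventually_scaledDiscr_ne_zero_and_scaledSource_ne_zero hκ (Real.sqrt_pos.2 hτ).ne']
    with u hQu hCu hu hH
  exact hestLambda_eq hξ hβ hτ hu.1 hQu hu.2 hCu hH

/-- Where `momentGap` is negative, the logarithm in `hestG` has imaginary part `π`. -/
theorem eventually_momentGap_nonneg (hκ : κ ≠ 0) (hξ : ξ ≠ 0) (hβ : betaT κ ξ t ≠ 0)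
    (hm : cirHalfDegree κ θ ξ ≠ 0) (hτ : 0 < τ)
    (hQ : |scaledDiscr κ ξ ρ √τ u₀| < 1) (hC : 0 < riccatiDenom κ ξ ρ √τ u₀)
    (hu₀ : u₀ ∈ interior {u : ℝ | (hestLambda κ θ ξ v ρ t τ u).im = 0}) :
    ∀ᶠ u in 𝓝 u₀, 0 ≤ momentGap κ ξ ρ (betaT κ ξ t) √τ u := by
  have hpunctured : ∀ᶠ u in 𝓝[≠] u₀, 0 ≤ momentGap κ ξ ρ (betaT κ ξ t) √τ u := by
    filter_upwards [eventually_hestLambda_eq (θ := θ) (v := v) hκ hξ hβ hτ hQ hC,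
      nhdsWithin_le_nhds (mem_interior_iff_mem_nhds.1 hu₀)] with u hu him
    by_contra! hneg
    change (hestLambda κ θ ξ v ρ t τ u).im = 0 at him
    rw [hu hneg.ne, Complex.im_ofReal_mul, Complex.sub_im, Complex.im_ofReal_mul,
      Complex.ofReal_im, Complex.log_im, Complex.arg_ofReal_of_neg hneg, zero_sub] at him
    exact mul_ne_zero (Real.sqrt_pos.2 hτ).ne' (neg_ne_zero.2 (mul_ne_zero hm Real.pi_ne_zero)) him
  have hlim := (hasDerivAt_momentGap hC.ne' (β := betaT κ ξ t)).continuousAt.tendsto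
  have hat : 0 ≤ momentGap κ ξ ρ (betaT κ ξ t) √τ u₀ :=
    ge_of_tendsto (hlim.mono_left nhdsWithin_le_nhds) hpunctured
  filter_upwards [eventually_nhdsWithin_iff.1 hpunctured] with u hu
  rcases eq_or_ne u u₀ with rfl | hne
  exacts [hat, hu hne]

theorem momentGap_pos (hκ : κ ≠ 0) (hξ : ξ ≠ 0) (hβ : betaT κ ξ t ≠ 0)
    (hm : cirHalfDegree κ θ ξ ≠ 0) (hτ : 0 < τ)
    (hQ : |scaledDiscr κ ξ ρ √τ u₀| < 1) (hC : 0 < riccatiDenom κ ξ ρ √τ u₀)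
    (hu₀ : u₀ ∈ interior {u : ℝ | (hestLambda κ θ ξ v ρ t τ u).im = 0})
    (hnondeg : momentGap κ ξ ρ (betaT κ ξ t) √τ u₀ = 0 →
      deriv (momentGap κ ξ ρ (betaT κ ξ t) √τ) u₀ ≠ 0) :
    0 < momentGap κ ξ ρ (betaT κ ξ t) √τ u₀ := by
  have hnonneg := eventually_momentGap_nonneg hκ hξ hβ hm hτ hQ hC hu₀
  refine lt_of_le_of_ne hnonneg.self_of_nhds fun h => hnondeg h.symm ?_
  have hmin : IsLocalMin (momentGap κ ξ ρ (betaT κ ξ t) √τ) u₀ :=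
    hnonneg.mono fun u hu => h ▸ hu
  exact hmin.deriv_eq_zero

/-- Differentiability, forced by `k ≠ 0`, extends the regular formula to the exceptional points. -/
theorem eventually_hestLambda_eq_regularG (hκ : κ ≠ 0) (hξ : ξ ≠ 0) (hβ : betaT κ ξ t ≠ 0)
    (hτ : 0 < τ) (hQ : |scaledDiscr κ ξ ρ √τ u₀| < 1) (hC : 0 < riccatiDenom κ ξ ρ √τ u₀)
    (hH : 0 < momentGap κ ξ ρ (betaT κ ξ t) √τ u₀) (hk : k ≠ 0)
    (hderiv : deriv (hestLambda κ θ ξ v ρ t τ) u₀ = k) :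
    hestLambda κ θ ξ v ρ t τ =ᶠ[𝓝 u₀] fun u => ((√τ * regularG κ θ ξ v ρ t √τ u : ℝ) : ℂ) := by
  have hH' := (hasDerivAt_momentGap hC.ne' (β := betaT κ ξ t)).continuousAt.eventually
    (lt_mem_nhds hH)
  have hpunctured : hestLambda κ θ ξ v ρ t τ =ᶠ[𝓝[≠] u₀]
      fun u => ((√τ * regularG κ θ ξ v ρ t √τ u : ℝ) : ℂ) := by
    filter_upwards [eventually_hestLambda_eq hκ hξ hβ hτ hQ hC, nhdsWithin_le_nhds hH']
      with u hu hHu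
    rw [hu hHu.ne', ← Complex.ofReal_log hHu.le, regularG]
    push_cast
    ring
  have hdiff : DifferentiableAt ℝ (hestLambda κ θ ξ v ρ t τ) u₀ :=
    differentiableAt_of_deriv_ne_zero (by rw [hderiv]; exact_mod_cast hk)
  have hreg := ((hasDerivAt_regularG (θ := θ) (v := v) hC.ne' hH.ne').const_mul √τ).ofReal_comp
  rw [← hdiff.continuousAt.eventuallyEq_nhds_iff_eventuallyEq_nhdsNE hreg.continuousAt]
  exact hpunctured

theorem mul_deriv_regularG_eq (hκ : κ ≠ 0) (hξ : ξ ≠ 0) (hβ : betaT κ ξ t ≠ 0) (hτ : 0 < τ)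
    (hQ : |scaledDiscr κ ξ ρ √τ u₀| < 1) (hC : 0 < riccatiDenom κ ξ ρ √τ u₀)
    (hH : 0 < momentGap κ ξ ρ (betaT κ ξ t) √τ u₀) (hk : k ≠ 0)
    (hderiv : deriv (hestLambda κ θ ξ v ρ t τ) u₀ = k) :
    √τ * deriv (regularG κ θ ξ v ρ t √τ) u₀ = k := by
  have heq := (eventually_hestLambda_eq_regularG hκ hξ hβ hτ hQ hC hH hk hderiv).deriv_eq
  have hreg := (hasDerivAt_regularG (θ := θ) (v := v) hC.ne' hH.ne').differentiableAt.hasDerivAt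
  rw [hderiv, (hreg.const_mul √τ).ofReal_comp.deriv] at heq
  exact_mod_cast heq.symm

end CriticalPoint

section SmallMaturity

variable {α : Type*} {κ ξ ρ : ℝ} {l : Filter α} {e u : α → ℝ}

@[fun_prop]
theorem boundedAlong_B1hat (hu : BoundedAlong l u) :
    BoundedAlong l fun x => B1hat ρ ξ (u x) := by
  unfold B1hat
  fun_prop

@[fun_prop]
theorem boundedAlong_B1hat' (hu : BoundedAlong l u) :
    BoundedAlong l fun x => B1hat' ρ ξ (u x) := by
  unfold B1hat'
  fun_prop

@[fun_prop]
theorem boundedAlong_scaledDrift (he : BoundedAlong l e) (hu : BoundedAlong l u) :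
    BoundedAlong l fun x => scaledDrift κ ξ ρ (e x) (u x) := by
  unfold scaledDrift
  fun_prop

@[fun_prop]
theorem boundedAlong_scaledSource (he : BoundedAlong l e) (hu : BoundedAlong l u) :
    BoundedAlong l fun x => scaledSource (e x) (u x) := by
  unfold scaledSource
  fun_prop

variable (κ ξ ρ)

theorem isBigO_scaledDiscr (he : Tendsto e l (𝓝 0)) (hu : BoundedAlong l u) :
    (fun x => scaledDiscr κ ξ ρ (e x) (u x)) =O[l] fun x => e x ^ 2 := by
  have he' := BoundedAlong.of_tendsto he
  have hfactor : BoundedAlong l fun x =>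
      ((κ * e x - ρ * ξ * u x) / 2) ^ 2 - ξ ^ 2 / 2 * scaledSource (e x) (u x) := by fun_prop
  refine (hfactor.mul_isBigO (isBigO_refl (fun x => e x ^ 2) l)).congr_left fun x => ?_
  rw [scaledDiscr, scaledDrift]
  ring

theorem isBigO_deriv_scaledDiscr (he : Tendsto e l (𝓝 0)) (hu : BoundedAlong l u) :
    (fun x => deriv (scaledDiscr κ ξ ρ (e x)) (u x)) =O[l] fun x => e x ^ 2 := by
  have he' := BoundedAlong.of_tendsto he
  have hfactor : BoundedAlong l fun x =>
      -(ρ * ξ) * ((κ * e x - ρ * ξ * u x) / 2) - ξ ^ 2 / 2 * (u x - e x / 2) := by fun_prop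
  refine (hfactor.mul_isBigO (isBigO_refl (fun x => e x ^ 2) l)).congr_left fun x => ?_
  rw [hasDerivAt_scaledDiscr.deriv, scaledDrift]
  ring

theorem tendsto_scaledDiscr (he : Tendsto e l (𝓝 0)) (hu : BoundedAlong l u) :
    Tendsto (fun x => scaledDiscr κ ξ ρ (e x) (u x)) l (𝓝 0) :=
  (isBigO_scaledDiscr κ ξ ρ he hu).trans_tendsto <| by
    simpa only [zero_pow two_ne_zero] using he.pow 2

theorem isBigO_stumpff_scaledDiscr_sub (he : Tendsto e l (𝓝 0)) (hu : BoundedAlong l u) (j : ℕ) :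
    (fun x => stumpff j (scaledDiscr κ ξ ρ (e x) (u x)) - 1 / j.factorial)
      =O[l] fun x => e x ^ 2 := by
  have hlip := (differentiable_stumpff j 0).isBigO_sub
  simp only [sub_zero, stumpff_zero_right] at hlip
  exact (hlip.comp_tendsto (tendsto_scaledDiscr κ ξ ρ he hu)).trans (isBigO_scaledDiscr κ ξ ρ he hu)

theorem isBigO_deriv_stumpff_scaledDiscr (he : Tendsto e l (𝓝 0)) (hu : BoundedAlong l u) (j : ℕ) :
    (fun x => deriv (stumpff j) (scaledDiscr κ ξ ρ (e x) (u x)) *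
      deriv (scaledDiscr κ ξ ρ (e x)) (u x)) =O[l] fun x => e x ^ 2 := by
  have hcont : Continuous (deriv (stumpff j)) := (contDiff_stumpff j).continuous_deriv le_rfl
  have hlim := (hcont.tendsto 0).comp (tendsto_scaledDiscr κ ξ ρ he hu)
  exact (BoundedAlong.of_tendsto hlim).mul_isBigO (isBigO_deriv_scaledDiscr κ ξ ρ he hu)

theorem isBigO_riccatiDenom_sub (he : Tendsto e l (𝓝 0)) (hu : BoundedAlong l u) :
    (fun x => riccatiDenom κ ξ ρ (e x) (u x) - (1 - ρ * ξ * u x * e x / 2))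
      =O[l] fun x => e x ^ 2 := by
  have hdrift : BoundedAlong l fun x => scaledDrift κ ξ ρ (e x) (u x) := by
    have he' := BoundedAlong.of_tendsto he
    fun_prop
  have h₀ := isBigO_stumpff_scaledDiscr_sub κ ξ ρ he hu 0
  have h₁ := isBigO_stumpff_scaledDiscr_sub κ ξ ρ he hu 1
  refine ((h₀.add (hdrift.mul_isBigO h₁)).add
    ((isBigO_refl (fun x => e x ^ 2) l).const_mul_left (κ / 2))).congr_left fun x => ?_
  rw [riccatiDenom, scaledDrift, Nat.factorial_zero, Nat.factorial_one]
  push_cast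
  ring

theorem isBigO_riccatiDenom_sub_one (he : Tendsto e l (𝓝 0)) (hu : BoundedAlong l u) :
    (fun x => riccatiDenom κ ξ ρ (e x) (u x) - 1) =O[l] e := by
  have hlin : BoundedAlong l fun x => -(ρ * ξ * u x) / 2 := by fun_prop
  refine (((isBigO_riccatiDenom_sub κ ξ ρ he hu).trans (isBigO_sq_self he)).add
    (hlin.mul_isBigO (isBigO_refl e l))).congr_left fun x => ?_
  ring

theorem tendsto_riccatiDenom (he : Tendsto e l (𝓝 0)) (hu : BoundedAlong l u) :
    Tendsto (fun x => riccatiDenom κ ξ ρ (e x) (u x)) l (𝓝 1) :=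
  tendsto_sub_nhds_zero_iff.1 ((isBigO_riccatiDenom_sub_one κ ξ ρ he hu).trans_tendsto he)

theorem isBigO_deriv_riccatiDenom_add (he : Tendsto e l (𝓝 0)) (hu : BoundedAlong l u) :
    (fun x => deriv (riccatiDenom κ ξ ρ (e x)) (u x) + ρ * ξ * e x / 2)
      =O[l] fun x => e x ^ 2 := by
  have he' := BoundedAlong.of_tendsto he
  have hdrift : BoundedAlong l fun x => scaledDrift κ ξ ρ (e x) (u x) := by fun_prop
  have hslope : BoundedAlong l fun x => -(ρ * ξ * e x) / 2 := by fun_prop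
  have h₁ := isBigO_stumpff_scaledDiscr_sub κ ξ ρ he hu 1
  refine ((isBigO_deriv_stumpff_scaledDiscr κ ξ ρ he hu 0).add
    ((hslope.mul_isBigO h₁).add
      (hdrift.mul_isBigO (isBigO_deriv_stumpff_scaledDiscr κ ξ ρ he hu 1)))).congr_left fun x => ?_
  rw [hasDerivAt_riccatiDenom.deriv, Nat.factorial_one]
  push_cast
  ring

theorem isBigO_riccatiA (he : Tendsto e l (𝓝 0)) (hu : BoundedAlong l u) :
    (fun x => riccatiA κ ξ ρ (e x) (u x)) =O[l] e := by
  have hlog : (fun x => Real.log (riccatiDenom κ ξ ρ (e x) (u x))) =O[l] e := by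
    have hlip := (Real.differentiableAt_log one_ne_zero).isBigO_sub.comp_tendsto
      (tendsto_riccatiDenom κ ξ ρ he hu)
    simp only [Function.comp_def, Real.log_one, sub_zero] at hlip
    exact hlip.trans (isBigO_riccatiDenom_sub_one κ ξ ρ he hu)
  have hfactor : BoundedAlong l fun x => (κ * e x - ρ * ξ * u x) / 2 := by
    have he' := BoundedAlong.of_tendsto he
    fun_prop
  refine ((hfactor.mul_isBigO (isBigO_refl e l)).sub hlog).congr_left fun x => ?_
  rw [riccatiA, scaledDrift]
  ring

theorem isBigO_deriv_riccatiDenom (he : Tendsto e l (𝓝 0)) (hu : BoundedAlong l u) :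
    (fun x => deriv (riccatiDenom κ ξ ρ (e x)) (u x)) =O[l] e := by
  refine (((isBigO_deriv_riccatiDenom_add κ ξ ρ he hu).trans (isBigO_sq_self he)).sub
    ((isBigO_refl e l).const_mul_left (ρ * ξ / 2))).congr_left fun x => ?_
  ring

theorem isBigO_deriv_riccatiA (he : Tendsto e l (𝓝 0)) (hu : BoundedAlong l u) :
    (fun x => deriv (riccatiA κ ξ ρ (e x)) (u x)) =O[l] e := by
  have hC := tendsto_riccatiDenom κ ξ ρ he hu
  refine (((isBigO_refl e l).const_mul_left (-(ρ * ξ) / 2)).sub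
    ((BoundedAlong.of_tendsto (hC.inv₀ one_ne_zero)).mul_isBigO
      (isBigO_deriv_riccatiDenom κ ξ ρ he hu))).congr' ?_ .rfl
  filter_upwards [hC.eventually_ne one_ne_zero] with x hx
  rw [(hasDerivAt_riccatiA hx).deriv]
  ring

theorem isBigO_riccatiB_sub (he : Tendsto e l (𝓝 0)) (hu : BoundedAlong l u) :
    (fun x => riccatiB κ ξ ρ (e x) (u x) - (u x ^ 2 / 2 + e x * B1hat ρ ξ (u x)))
      =O[l] fun x => e x ^ 2 := by
  have he' := BoundedAlong.of_tendsto he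
  have hN : BoundedAlong l fun x => scaledSource (e x) (u x) := by fun_prop
  have hmain : BoundedAlong l fun x => u x ^ 2 / 2 + e x * B1hat ρ ξ (u x) := by fun_prop
  have hrem : BoundedAlong l fun x => ρ * ξ * u x * B1hat ρ ξ (u x) / 2 := by fun_prop
  have hC := tendsto_riccatiDenom κ ξ ρ he hu
  have h₁ := isBigO_stumpff_scaledDiscr_sub κ ξ ρ he hu 1
  refine ((BoundedAlong.of_tendsto (hC.inv₀ one_ne_zero)).mul_isBigO
    (((hN.mul_isBigO h₁).sub (hmain.mul_isBigO (isBigO_riccatiDenom_sub κ ξ ρ he hu))).add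
      (hrem.mul_isBigO (isBigO_refl (fun x => e x ^ 2) l)))).congr' ?_ .rfl
  filter_upwards [hC.eventually_ne one_ne_zero] with x hx
  rw [inv_mul_eq_iff_eq_mul₀ hx, mul_sub (riccatiDenom _ _ _ _ _), riccatiB,
    mul_div_cancel₀ _ hx, scaledSource, B1hat, Nat.factorial_one]
  push_cast
  ring

theorem isBigO_deriv_riccatiB_sub (he : Tendsto e l (𝓝 0)) (hu : BoundedAlong l u) :
    (fun x => deriv (riccatiB κ ξ ρ (e x)) (u x) - (u x + e x * B1hat' ρ ξ (u x)))
      =O[l] fun x => e x ^ 2 := by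
  have he' := BoundedAlong.of_tendsto he
  have hN : BoundedAlong l fun x => scaledSource (e x) (u x) := by fun_prop
  have hN' : BoundedAlong l fun x => u x - e x / 2 := by fun_prop
  have hB : BoundedAlong l fun x => u x ^ 2 / 2 + e x * B1hat ρ ξ (u x) := by fun_prop
  have hB' : BoundedAlong l fun x => u x + e x * B1hat' ρ ξ (u x) := by fun_prop
  have hrem : BoundedAlong l fun x =>
      ρ * ξ / 2 * (B1hat ρ ξ (u x) + u x * B1hat' ρ ξ (u x)) := by fun_prop
  have hC := tendsto_riccatiDenom κ ξ ρ he hu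
  have hC' : BoundedAlong l fun x => deriv (riccatiDenom κ ξ ρ (e x)) (u x) :=
    (isBigO_deriv_riccatiDenom κ ξ ρ he hu).trans he'
  have hnum := (hN'.mul_isBigO (isBigO_stumpff_scaledDiscr_sub κ ξ ρ he hu 1)).add
    (hN.mul_isBigO (isBigO_deriv_stumpff_scaledDiscr κ ξ ρ he hu 1))
  have hden := (hB.mul_isBigO (isBigO_deriv_riccatiDenom_add κ ξ ρ he hu)).add
    (hB'.mul_isBigO (isBigO_riccatiDenom_sub κ ξ ρ he hu))
  refine ((BoundedAlong.of_tendsto (hC.inv₀ one_ne_zero)).mul_isBigO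
    (((hnum.sub (hC'.mul_isBigO (isBigO_riccatiB_sub κ ξ ρ he hu))).sub hden).add
      (hrem.mul_isBigO (isBigO_refl (fun x => e x ^ 2) l)))).congr' ?_ .rfl
  filter_upwards [hC.eventually_ne one_ne_zero] with x hx
  rw [inv_mul_eq_iff_eq_mul₀ hx, mul_sub (riccatiDenom _ _ _ _ _),
    (hasDerivAt_riccatiB hx).deriv, mul_div_cancel₀ _ hx, B1hat, B1hat', Nat.factorial_one]
  push_cast
  ring

variable (β : ℝ)

theorem isBigO_momentGap_sub (he : Tendsto e l (𝓝 0)) (hu : BoundedAlong l u) :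
    (fun x => momentGap κ ξ ρ β (e x) (u x) -
      (1 - β * u x ^ 2 - 2 * β * e x * B1hat ρ ξ (u x))) =O[l] fun x => e x ^ 2 := by
  refine ((isBigO_riccatiB_sub κ ξ ρ he hu).const_mul_left (-2 * β)).congr_left fun x => ?_
  rw [momentGap]
  ring

theorem isBigO_deriv_momentGap_add (he : Tendsto e l (𝓝 0)) (hu : BoundedAlong l u) :
    (fun x => deriv (momentGap κ ξ ρ β (e x)) (u x) +
      2 * β * (u x + e x * B1hat' ρ ξ (u x))) =O[l] fun x => e x ^ 2 := by
  refine ((isBigO_deriv_riccatiB_sub κ ξ ρ he hu).const_mul_left (-2 * β)).congr' ?_ .rfl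
  filter_upwards [(tendsto_riccatiDenom κ ξ ρ he hu).eventually_ne one_ne_zero]
    with x hx
  rw [(hasDerivAt_momentGap hx).deriv]
  ring

theorem boundedAlong_momentGap (he : Tendsto e l (𝓝 0)) (hu : BoundedAlong l u) :
    BoundedAlong l fun x => momentGap κ ξ ρ β (e x) (u x) := by
  have he' := BoundedAlong.of_tendsto he
  have hmain : BoundedAlong l fun x => 1 - β * u x ^ 2 - 2 * β * e x * B1hat ρ ξ (u x) := by
    fun_prop
  have hrem : BoundedAlong l _ := (isBigO_momentGap_sub κ ξ ρ β he hu).trans (he'.pow 2)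
  simpa only [sub_add_cancel] using hrem.add hmain

theorem boundedAlong_deriv_momentGap (he : Tendsto e l (𝓝 0)) (hu : BoundedAlong l u) :
    BoundedAlong l fun x => deriv (momentGap κ ξ ρ β (e x)) (u x) := by
  have he' := BoundedAlong.of_tendsto he
  have hmain : BoundedAlong l fun x => 2 * β * (u x + e x * B1hat' ρ ξ (u x)) := by fun_prop
  have hrem : BoundedAlong l _ :=
    (isBigO_deriv_momentGap_add κ ξ ρ β he hu).trans (he'.pow 2)
  simpa only [add_sub_cancel_right] using hrem.sub hmain

/-- To leading order `H = 1 - β u²` and `H' = - 2 β u`, so `2 H - u H'` is close to `2`. -/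
theorem eventually_deriv_momentGap_ne_zero (he : Tendsto e l (𝓝 0)) (hu : BoundedAlong l u) :
    ∀ᶠ x in l, momentGap κ ξ ρ β (e x) (u x) = 0 →
      deriv (momentGap κ ξ ρ β (e x)) (u x) ≠ 0 := by
  have hfactor : BoundedAlong l fun x =>
      2 * β * (u x * B1hat' ρ ξ (u x) - 2 * B1hat ρ ξ (u x)) := by fun_prop
  have hO : (fun x => 2 * momentGap κ ξ ρ β (e x) (u x) -
      u x * deriv (momentGap κ ξ ρ β (e x)) (u x) - 2) =O[l] e := by
    refine (((((isBigO_momentGap_sub κ ξ ρ β he hu).const_mul_left 2).sub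
      (hu.mul_isBigO (isBigO_deriv_momentGap_add κ ξ ρ β he hu))).trans (isBigO_sq_self he)).add
      (hfactor.mul_isBigO (isBigO_refl e l))).congr_left fun x => ?_
    ring
  have hlim := tendsto_sub_nhds_zero_iff.1 (hO.trans_tendsto he)
  filter_upwards [hlim.eventually_ne two_ne_zero] with x hx hH hH'
  exact hx (by rw [hH, hH', mul_zero, mul_zero, sub_zero])

end SmallMaturity

section SaddlePoint

variable {κ θ ξ v ρ t k : ℝ} {u : ℝ → ℝ}

/-- `IsForwardSaddle κ θ ξ v ρ t k τ u` says that `u` solves `Λ_τ'(u) = k` on `D_{t,τ}`, that is,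
`u = u*_τ(k)`. -/
def IsForwardSaddle (κ θ ξ v ρ t k τ u : ℝ) : Prop :=
  u ∈ hestDom κ θ ξ v ρ t τ ∧ deriv (hestLambda κ θ ξ v ρ t τ) u = k

theorem betaT_pos (hκ : κ ≠ 0) (hξ : ξ ≠ 0) (ht : 0 < t) : 0 < betaT κ ξ t := by
  rw [betaT, mul_div_assoc]
  refine mul_pos (by positivity) ?_
  rcases hκ.lt_or_gt with hκ | hκ
  · exact div_pos_of_neg_of_neg (sub_neg.2 (Real.one_lt_exp_iff.2 (by nlinarith))) (by linarith)
  · exact div_pos (sub_pos.2 (Real.exp_lt_one_iff.2 (by nlinarith))) (by linarith)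

theorem cirHalfDegree_ne_zero (hκ : κ ≠ 0) (hθ : θ ≠ 0) (hξ : ξ ≠ 0) :
    cirHalfDegree κ θ ξ ≠ 0 := by
  rw [cirHalfDegree]
  positivity

theorem tendsto_sqrt_nhdsGT_zero : Tendsto (fun τ : ℝ => √τ) (𝓝[>] 0) (𝓝 0) :=
  (Real.continuous_sqrt.tendsto' 0 0 Real.sqrt_zero).mono_left nhdsWithin_le_nhds

theorem eventually_abs_scaledDiscr_lt_one (hu : BoundedAlong (𝓝[>] 0) u) :
    ∀ᶠ τ in 𝓝[>] 0, |scaledDiscr κ ξ ρ √τ (u τ)| < 1 := by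
  have hlim := (tendsto_scaledDiscr κ ξ ρ tendsto_sqrt_nhdsGT_zero hu).abs
  rw [abs_zero] at hlim
  exact hlim.eventually_lt_const zero_lt_one

theorem eventually_riccatiDenom_pos (hu : BoundedAlong (𝓝[>] 0) u) :
    ∀ᶠ τ in 𝓝[>] 0, 0 < riccatiDenom κ ξ ρ √τ (u τ) :=
  (tendsto_riccatiDenom κ ξ ρ tendsto_sqrt_nhdsGT_zero hu).eventually_const_lt zero_lt_one

theorem eventually_notMem_interior_of_one_lt {u₀ : ℝ} (hκ : κ ≠ 0) (hθ : θ ≠ 0) (hξ : ξ ≠ 0)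
    (ht : 0 < t) (hu₀ : 1 < betaT κ ξ t * u₀ ^ 2) :
    ∀ᶠ τ in 𝓝[>] 0, u₀ ∉ interior {u : ℝ | (hestLambda κ θ ξ v ρ t τ u).im = 0} := by
  have hu : BoundedAlong (𝓝[>] (0 : ℝ)) fun _ => u₀ := .const u₀
  have he := tendsto_sqrt_nhdsGT_zero
  have hgap : Tendsto (fun τ => momentGap κ ξ ρ (betaT κ ξ t) √τ u₀) (𝓝[>] 0)
      (𝓝 (1 - betaT κ ξ t * u₀ ^ 2)) := by
    have hlin := ((he.const_mul (2 * betaT κ ξ t)).mul_const (B1hat ρ ξ u₀)).const_sub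
      (1 - betaT κ ξ t * u₀ ^ 2)
    have herr := (isBigO_momentGap_sub κ ξ ρ (betaT κ ξ t) he hu).trans_tendsto
      (by simpa only [zero_pow two_ne_zero] using he.pow 2)
    simpa using herr.add hlin
  filter_upwards [eventually_abs_scaledDiscr_lt_one hu, eventually_riccatiDenom_pos hu,
    self_mem_nhdsWithin, hgap.eventually_lt_const (sub_neg.2 hu₀)] with τ hQ hC hτ hneg hmem
  exact hneg.not_ge (eventually_momentGap_nonneg hκ hξ (betaT_pos hκ hξ ht).ne'
    (cirHalfDegree_ne_zero hκ hθ hξ) hτ hQ hC hmem).self_of_nhds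

theorem abs_le_of_mem_hestDom {τ M x : ℝ} (hM : 0 ≤ M)
    (hpos : M ∉ interior {u : ℝ | (hestLambda κ θ ξ v ρ t τ u).im = 0})
    (hneg : -M ∉ interior {u : ℝ | (hestLambda κ θ ξ v ρ t τ u).im = 0})
    (hx : x ∈ hestDom κ θ ξ v ρ t τ) : |x| ≤ M := by
  have h₀ := mem_connectedComponentIn (connectedComponentIn_nonempty_iff.1 ⟨x, hx⟩)
  have hconn := isPreconnected_connectedComponentIn
    (F := interior {u : ℝ | (hestLambda κ θ ξ v ρ t τ u).im = 0}) (x := 0)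
  rw [abs_le]
  refine ⟨not_lt.1 fun hlt => hneg ?_, not_lt.1 fun hlt => hpos ?_⟩
  · exact connectedComponentIn_subset _ _ (hconn.Icc_subset hx h₀ ⟨hlt.le, neg_nonpos.2 hM⟩)
  · exact connectedComponentIn_subset _ _ (hconn.Icc_subset h₀ hx ⟨hM, hlt.le⟩)

theorem boundedAlong_of_eventually_mem_hestDom (hκ : κ ≠ 0) (hθ : θ ≠ 0) (hξ : ξ ≠ 0)
    (ht : 0 < t) (hu : ∀ᶠ τ in 𝓝[>] 0, u τ ∈ hestDom κ θ ξ v ρ t τ) :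
    BoundedAlong (𝓝[>] 0) u := by
  have hβ := betaT_pos hκ hξ ht
  have hM : 1 < betaT κ ξ t * √(2 / betaT κ ξ t) ^ 2 := by
    rw [Real.sq_sqrt (by positivity), mul_div_cancel₀ _ hβ.ne']
    exact one_lt_two
  refine .of_eventually_norm_le (C := √(2 / betaT κ ξ t)) ?_
  filter_upwards [hu, eventually_notMem_interior_of_one_lt hκ hθ hξ ht hM,
    eventually_notMem_interior_of_one_lt hκ hθ hξ ht (by rwa [neg_sq])] with τ hmem hpos hneg
  exact abs_le_of_mem_hestDom (Real.sqrt_nonneg _) hpos hneg hmem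

theorem IsForwardSaddle.boundedAlong (hκ : κ ≠ 0) (hθ : θ ≠ 0) (hξ : ξ ≠ 0) (ht : 0 < t)
    (hu : ∀ᶠ τ in 𝓝[>] 0, IsForwardSaddle κ θ ξ v ρ t k τ (u τ)) : BoundedAlong (𝓝[>] 0) u :=
  boundedAlong_of_eventually_mem_hestDom hκ hθ hξ ht (hu.mono fun _ h => h.1)

theorem IsForwardSaddle.eventually_momentGap_pos (hκ : κ ≠ 0) (hθ : θ ≠ 0) (hξ : ξ ≠ 0)
    (ht : 0 < t) (hu : ∀ᶠ τ in 𝓝[>] 0, IsForwardSaddle κ θ ξ v ρ t k τ (u τ)) :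
    ∀ᶠ τ in 𝓝[>] 0, 0 < momentGap κ ξ ρ (betaT κ ξ t) √τ (u τ) := by
  have hbdd := IsForwardSaddle.boundedAlong hκ hθ hξ ht hu
  filter_upwards [hu, self_mem_nhdsWithin, eventually_abs_scaledDiscr_lt_one hbdd,
    eventually_riccatiDenom_pos hbdd, eventually_deriv_momentGap_ne_zero κ ξ ρ (betaT κ ξ t)
      tendsto_sqrt_nhdsGT_zero hbdd] with τ hsaddle hτ hQ hC hnondeg
  exact momentGap_pos hκ hξ (betaT_pos hκ hξ ht).ne' (cirHalfDegree_ne_zero hκ hθ hξ) hτ hQ hC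
    (connectedComponentIn_subset _ _ hsaddle.1) hnondeg

theorem IsForwardSaddle.eventually_hestLambda_eq (hκ : κ ≠ 0) (hθ : θ ≠ 0) (hξ : ξ ≠ 0)
    (ht : 0 < t) (hk : k ≠ 0) (hu : ∀ᶠ τ in 𝓝[>] 0, IsForwardSaddle κ θ ξ v ρ t k τ (u τ)) :
    ∀ᶠ τ in 𝓝[>] 0, hestLambda κ θ ξ v ρ t τ (u τ) =
      ((√τ * regularG κ θ ξ v ρ t √τ (u τ) : ℝ) : ℂ) := by
  have hbdd := IsForwardSaddle.boundedAlong hκ hθ hξ ht hu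
  filter_upwards [hu, self_mem_nhdsWithin, eventually_abs_scaledDiscr_lt_one hbdd,
    eventually_riccatiDenom_pos hbdd, IsForwardSaddle.eventually_momentGap_pos hκ hθ hξ ht hu]
    with τ hsaddle hτ hQ hC hH
  exact (eventually_hestLambda_eq_regularG hκ hξ (betaT_pos hκ hξ ht).ne' hτ hQ hC hH hk
    hsaddle.2).self_of_nhds

theorem IsForwardSaddle.eventually_saddle_equation (hκ : κ ≠ 0) (hθ : θ ≠ 0) (hξ : ξ ≠ 0)
    (ht : 0 < t) (hk : k ≠ 0) (hu : ∀ᶠ τ in 𝓝[>] 0, IsForwardSaddle κ θ ξ v ρ t k τ (u τ)) :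
    ∀ᶠ τ in 𝓝[>] 0,
      k * momentGap κ ξ ρ (betaT κ ξ t) √τ (u τ) ^ 2 = √τ *
        (cirHalfDegree κ θ ξ * deriv (riccatiA κ ξ ρ √τ) (u τ) *
            momentGap κ ξ ρ (betaT κ ξ t) √τ (u τ) ^ 2 -
          (cirHalfNoncentrality κ ξ v t +
              cirHalfDegree κ θ ξ * momentGap κ ξ ρ (betaT κ ξ t) √τ (u τ)) *
            deriv (momentGap κ ξ ρ (betaT κ ξ t) √τ) (u τ)) := by
  have hbdd := IsForwardSaddle.boundedAlong hκ hθ hξ ht hu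
  filter_upwards [hu, self_mem_nhdsWithin, eventually_abs_scaledDiscr_lt_one hbdd,
    eventually_riccatiDenom_pos hbdd, IsForwardSaddle.eventually_momentGap_pos hκ hθ hξ ht hu]
    with τ hsaddle hτ hQ hC hH
  rw [← mul_deriv_regularG_eq hκ hξ (betaT_pos hκ hξ ht).ne' hτ hQ hC hH hk hsaddle.2,
    (hasDerivAt_regularG hC.ne' hH.ne').deriv]
  field_simp
  ring

end SaddlePoint

section SaddleSystem

/-- The saddle-point equation `Λ'(u) = k` up to terms of order `s⁴`, as the vanishing of a
polynomial in `s = τ^{1/4}`, the point `u` and the rescaled moment gap `η = (1 - 2 β B) / s`. -/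
def saddleDefect (β V m k ρ ξ s u η : ℝ) : ℝ :=
  2 * β * (V + m * s * η) * (u + s ^ 2 * B1hat' ρ ξ u) - k * η ^ 2

/-- The relation between the point `u` and the rescaled moment gap `η = (1 - 2 β B) / s` up to terms
of order `s⁴`, as the vanishing of a polynomial in `s = τ^{1/4}`, `u` and `η`. -/
def gapDefect (β ρ ξ s u η : ℝ) : ℝ :=
  β * u ^ 2 + 2 * β * s ^ 2 * B1hat ρ ξ u + s * η - 1

/-- `IsSaddleExpansion β V m k ρ ξ a₀ a₁ a₂ a₃ e₀ e₁ e₂` says that `u = a₀ + a₁ s + a₂ s² + a₃ s³`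
and `η = e₀ + e₁ s + e₂ s²` solve `saddleDefect = 0` to order `s²` and `gapDefect = 0` to order
`s³`; the fields are the vanishing coefficients. -/
structure IsSaddleExpansion (β V m k ρ ξ a₀ a₁ a₂ a₃ e₀ e₁ e₂ : ℝ) : Prop where
  saddle_zero : 2 * β * V * a₀ = k * e₀ ^ 2
  saddle_one : 2 * β * (V * a₁ + m * e₀ * a₀) = 2 * k * e₀ * e₁
  saddle_two : 2 * β * (V * (a₂ + B1hat' ρ ξ a₀) + m * (e₀ * a₁ + e₁ * a₀)) =
    k * (e₁ ^ 2 + 2 * e₀ * e₂)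
  gap_zero : β * a₀ ^ 2 = 1
  gap_one : e₀ = -2 * β * a₀ * a₁
  gap_two : e₁ = -β * (a₁ ^ 2 + 2 * a₀ * a₂) - 2 * β * B1hat ρ ξ a₀
  gap_three : e₂ = -β * (2 * a₀ * a₃ + 2 * a₁ * a₂) - 2 * β * B1hat' ρ ξ a₀ * a₁

variable {α : Type*} {β V m k ρ ξ a₀ a₁ a₂ a₃ e₀ e₁ e₂ : ℝ} {l : Filter α} {s u η : α → ℝ}

theorem tendsto_sq_of_gapDefect (hs : Tendsto s l (𝓝 0)) (hu : BoundedAlong l u)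
    (hη : BoundedAlong l η) (ha₀ : β * a₀ ^ 2 = 1)
    (hgap : Tendsto (fun x => gapDefect β ρ ξ (s x) (u x) (η x)) l (𝓝 0)) :
    Tendsto (fun x => u x ^ 2) l (𝓝 (a₀ ^ 2)) := by
  have hs' := BoundedAlong.of_tendsto hs
  have hrem : BoundedAlong l fun x => 2 * β * s x * B1hat ρ ξ (u x) + η x := by fun_prop
  have hlim := ((hgap.sub (hrem.mul_tendsto_zero hs)).div_const β).add_const (a₀ ^ 2)
  simp only [sub_zero, zero_div, zero_add] at hlim
  refine hlim.congr fun x => ?_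
  have hβ := left_ne_zero_of_mul_eq_one ha₀
  rw [gapDefect]
  field_simp
  linear_combination ha₀

theorem tendsto_sub_of_saddleDefect (hs : Tendsto s l (𝓝 0)) (hu : BoundedAlong l u)
    (hη : BoundedAlong l η)
    (hsaddle : Tendsto (fun x => saddleDefect β V m k ρ ξ (s x) (u x) (η x)) l (𝓝 0)) :
    Tendsto (fun x => 2 * β * V * u x - k * η x ^ 2) l (𝓝 0) := by
  have hs' := BoundedAlong.of_tendsto hs
  have hrem : BoundedAlong l fun x => 2 * β * (V * s x * B1hat' ρ ξ (u x) +
      m * η x * (u x + s x ^ 2 * B1hat' ρ ξ (u x))) := by fun_prop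
  have hlim := hsaddle.sub (hrem.mul_tendsto_zero hs)
  rw [sub_zero] at hlim
  refine hlim.congr fun x => ?_
  rw [saddleDefect]
  ring

/-- The gap equation determines `u` up to sign, and the saddle equation gives `u` the sign of
`k`. -/
theorem tendsto_of_saddleDefect (hw : 0 < 2 * β * V) (hk : k ≠ 0) (hak : 0 ≤ k * a₀)
    (hu : Tendsto (fun x => u x ^ 2) l (𝓝 (a₀ ^ 2)))
    (hsaddle : Tendsto (fun x => 2 * β * V * u x - k * η x ^ 2) l (𝓝 0)) :
    Tendsto u l (𝓝 a₀) := by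
  have hsq : Tendsto (fun x => k * (2 * β * V * u x) - (k * η x) ^ 2) l (𝓝 0) := by
    have hlim := hsaddle.const_mul k
    rw [mul_zero] at hlim
    refine hlim.congr fun x => ?_
    ring
  have hsign := tendsto_sub_abs_zero_of_tendsto_sub (.of_forall fun x => sq_nonneg _) hsq
  have habs : Tendsto (fun x => |k * u x|) l (𝓝 (k * a₀)) := by
    have hlim := (hu.const_mul (k ^ 2)).sqrt
    simp only [← mul_pow, Real.sqrt_sq_eq_abs, abs_of_nonneg hak] at hlim
    exact hlim
  have hlim := (((hsign.div_const (2 * β * V)).add habs).div_const k)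
  rw [zero_div, zero_add, mul_div_cancel_left₀ _ hk] at hlim
  refine hlim.congr fun x => ?_
  rw [mul_left_comm, abs_mul, abs_of_pos hw, ← mul_sub, mul_div_cancel_left₀ _ hw.ne',
    sub_add_cancel, mul_div_cancel_left₀ _ hk]

theorem tendsto_gap_of_saddleDefect (hk : k ≠ 0) (he₀ : 0 ≤ e₀) (hae : 2 * β * V * a₀ = k * e₀ ^ 2)
    (hu : Tendsto u l (𝓝 a₀)) (hη : ∀ᶠ x in l, 0 ≤ η x)
    (hsaddle : Tendsto (fun x => 2 * β * V * u x - k * η x ^ 2) l (𝓝 0)) :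
    Tendsto η l (𝓝 e₀) := by
  have hsq := (((hu.const_mul (2 * β * V)).sub hsaddle).div_const k).sqrt
  simp only [sub_zero, sub_sub_cancel, hae, mul_div_cancel_left₀ _ hk, Real.sqrt_sq he₀] at hsq
  refine hsq.congr' (hη.mono fun x hx => ?_)
  rw [Real.sqrt_sq hx]

theorem IsSaddleExpansion.isBigO_gapDefect
    (h : IsSaddleExpansion β V m k ρ ξ a₀ a₁ a₂ a₃ e₀ e₁ e₂) (hs : Tendsto s l (𝓝 0)) :
    (fun x => gapDefect β ρ ξ (s x) (a₀ + a₁ * s x + a₂ * s x ^ 2 + a₃ * s x ^ 3)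
      (e₀ + e₁ * s x + e₂ * s x ^ 2)) =O[l] fun x => s x ^ 4 := by
  have hs' := BoundedAlong.of_tendsto hs
  have hcoeff : BoundedAlong l fun x =>
      β * ((a₂ + s x * a₃) ^ 2 + 2 * a₁ * a₃) +
        2 * β * (B1hat' ρ ξ a₀ * (a₂ + s x * a₃) +
          3 * a₀ * ρ * ξ / 4 * (a₁ + s x * (a₂ + s x * a₃)) ^ 2 +
          ρ * ξ / 4 * s x * (a₁ + s x * (a₂ + s x * a₃)) ^ 3) := by fun_prop
  refine (hcoeff.mul_isBigO (isBigO_refl (fun x => s x ^ 4) l)).congr_left fun x => ?_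
  have hgap₂ := h.gap_two
  have hgap₃ := h.gap_three
  simp only [gapDefect, B1hat, B1hat'] at hgap₂ hgap₃ ⊢
  linear_combination -h.gap_zero - s x * h.gap_one - s x ^ 2 * hgap₂ - s x ^ 3 * hgap₃

theorem IsSaddleExpansion.isBigO_saddleDefect
    (h : IsSaddleExpansion β V m k ρ ξ a₀ a₁ a₂ a₃ e₀ e₁ e₂) (hs : Tendsto s l (𝓝 0)) :
    (fun x => saddleDefect β V m k ρ ξ (s x) (a₀ + a₁ * s x + a₂ * s x ^ 2 + a₃ * s x ^ 3)
      (e₀ + e₁ * s x + e₂ * s x ^ 2)) =O[l] fun x => s x ^ 3 := by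
  have hs' := BoundedAlong.of_tendsto hs
  have hcoeff : BoundedAlong l fun x =>
      2 * β * (V * a₃ + V * (3 * ρ * ξ / 4 * ((a₁ + s x * (a₂ + s x * a₃)) *
          (2 * a₀ + s x * (a₁ + s x * (a₂ + s x * a₃))))) +
        m * (e₂ * a₀ + (e₁ + s x * e₂) * a₁ + (e₀ + s x * (e₁ + s x * e₂)) *
          (a₂ + s x * a₃ + B1hat' ρ ξ (a₀ + s x * (a₁ + s x * (a₂ + s x * a₃)))))) -
        k * (2 * e₁ * e₂ + e₂ ^ 2 * s x) := by fun_prop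
  refine (hcoeff.mul_isBigO (isBigO_refl (fun x => s x ^ 3) l)).congr_left fun x => ?_
  have hsaddle₂ := h.saddle_two
  simp only [saddleDefect, B1hat'] at hsaddle₂ ⊢
  linear_combination -h.saddle_zero - s x * h.saddle_one - s x ^ 2 * hsaddle₂

theorem saddleDefect_sub (β V m k ρ ξ s u p η q : ℝ) :
    saddleDefect β V m k ρ ξ s u η - saddleDefect β V m k ρ ξ s p q =
      2 * β * (V + m * s * q) * (1 + s ^ 2 * (3 * ρ * ξ / 4) * (u + p)) * (u - p) -
        (k * (η + q) - 2 * β * m * s * (u + s ^ 2 * B1hat' ρ ξ u)) * (η - q) := by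
  simp only [saddleDefect, B1hat']
  ring

theorem gapDefect_sub (β ρ ξ s u p η q : ℝ) :
    gapDefect β ρ ξ s u η - gapDefect β ρ ξ s p q =
      (β * (u + p) + 2 * β * s ^ 2 * (ρ * ξ / 4 * (u ^ 2 + u * p + p ^ 2) - 1 / 2)) * (u - p) +
        s * (η - q) := by
  simp only [gapDefect, B1hat]
  ring

theorem isBigO_sub_of_defect_sub {p q : α → ℝ} (hβ : β ≠ 0) (hk : k ≠ 0) (ha₀ : a₀ ≠ 0)
    (he₀ : e₀ ≠ 0) (hs : Tendsto s l (𝓝 0)) (hu : Tendsto u l (𝓝 a₀)) (hp : Tendsto p l (𝓝 a₀))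
    (hη : Tendsto η l (𝓝 e₀)) (hq : Tendsto q l (𝓝 e₀)) {n : ℕ}
    (hsaddle : (fun x => saddleDefect β V m k ρ ξ (s x) (u x) (η x) -
      saddleDefect β V m k ρ ξ (s x) (p x) (q x)) =O[l] fun x => s x ^ n)
    (hgap : (fun x => gapDefect β ρ ξ (s x) (u x) (η x) -
      gapDefect β ρ ξ (s x) (p x) (q x)) =O[l] fun x => s x ^ (n + 1)) :
    ((fun x => u x - p x) =O[l] fun x => s x ^ (n + 1)) ∧
      (fun x => η x - q x) =O[l] fun x => s x ^ n := by
  have hs' := BoundedAlong.of_tendsto hs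
  have hu' := BoundedAlong.of_tendsto hu
  have hp' := BoundedAlong.of_tendsto hp
  have hq' := BoundedAlong.of_tendsto hq
  have hX : Tendsto (fun x => k * (η x + q x) -
      2 * β * m * s x * (u x + s x ^ 2 * B1hat' ρ ξ (u x))) l (𝓝 (k * (e₀ + e₀))) := by
    have hrem : BoundedAlong l fun x => 2 * β * m * (u x + s x ^ 2 * B1hat' ρ ξ (u x)) := by
      fun_prop
    simpa [mul_right_comm] using ((hη.add hq).const_mul k).sub (hrem.mul_tendsto_zero hs)
  have hZ : Tendsto (fun x => β * (u x + p x) + 2 * β * s x ^ 2 *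
      (ρ * ξ / 4 * (u x ^ 2 + u x * p x + p x ^ 2) - 1 / 2)) l (𝓝 (β * (a₀ + a₀))) := by
    have hrem : BoundedAlong l fun x => 2 * β * s x *
      (ρ * ξ / 4 * (u x ^ 2 + u x * p x + p x ^ 2) - 1 / 2) := by fun_prop
    have hlim := ((hu.add hp).const_mul β).add (hrem.mul_tendsto_zero hs)
    rw [add_zero] at hlim
    refine hlim.congr fun x => ?_
    ring
  have hY : BoundedAlong l fun x =>
      2 * β * (V + m * s x * q x) * (1 + s x ^ 2 * (3 * ρ * ξ / 4) * (u x + p x)) := by fun_prop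
  refine isBigO_of_linear_system hs hX ?_ hZ ?_ hY ?_ ?_
  · exact mul_ne_zero hk (by rwa [← two_mul, mul_ne_zero_iff_left two_ne_zero])
  · exact mul_ne_zero hβ (by simpa [← two_mul] using ha₀)
  · exact hsaddle.congr_left fun x => saddleDefect_sub ..
  · exact hgap.congr_left fun x => gapDefect_sub ..

theorem tendsto_cubic_truncation (hs : Tendsto s l (𝓝 0)) (a₀ a₁ a₂ a₃ : ℝ) :
    Tendsto (fun x => a₀ + a₁ * s x + a₂ * s x ^ 2 + a₃ * s x ^ 3) l (𝓝 a₀) := by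
  have hcont : Continuous fun y : ℝ => a₀ + a₁ * y + a₂ * y ^ 2 + a₃ * y ^ 3 := by fun_prop
  exact (hcont.tendsto' 0 a₀ (by ring)).comp hs

theorem IsSaddleExpansion.isBigO_sub (h : IsSaddleExpansion β V m k ρ ξ a₀ a₁ a₂ a₃ e₀ e₁ e₂)
    (hk : k ≠ 0) (he₀ : e₀ ≠ 0) (hs : Tendsto s l (𝓝 0)) (hu : Tendsto u l (𝓝 a₀))
    (hη : Tendsto η l (𝓝 e₀))
    (hsaddle : (fun x => saddleDefect β V m k ρ ξ (s x) (u x) (η x)) =O[l] fun x => s x ^ 3)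
    (hgap : (fun x => gapDefect β ρ ξ (s x) (u x) (η x)) =O[l] fun x => s x ^ 4) :
    ((fun x => u x - (a₀ + a₁ * s x + a₂ * s x ^ 2 + a₃ * s x ^ 3)) =O[l] fun x => s x ^ 4) ∧
      (fun x => η x - (e₀ + e₁ * s x + e₂ * s x ^ 2)) =O[l] fun x => s x ^ 3 := by
  have hq : Tendsto (fun x => e₀ + e₁ * s x + e₂ * s x ^ 2) l (𝓝 e₀) := by
    simpa only [zero_mul, add_zero] using tendsto_cubic_truncation hs e₀ e₁ e₂ 0
  have hβ := left_ne_zero_of_mul_eq_one h.gap_zero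
  have ha₀ := (pow_ne_zero_iff two_ne_zero).1 (right_ne_zero_of_mul_eq_one h.gap_zero)
  exact isBigO_sub_of_defect_sub hβ hk ha₀ he₀ hs hu (tendsto_cubic_truncation hs a₀ a₁ a₂ a₃) hη
    hq (hsaddle.sub (h.isBigO_saddleDefect hs)) (hgap.sub (h.isBigO_gapDefect hs))

end SaddleSystem

section RescaledGap

variable {α : Type*} {κ ξ ρ β V m k : ℝ} {l : Filter α} {e s u η : α → ℝ}

theorem isBigO_gapDefect_of_momentGap (hse : ∀ x, s x ^ 2 = e x) (hs : Tendsto s l (𝓝 0))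
    (hu : BoundedAlong l u) (hgap : ∀ᶠ x in l, momentGap κ ξ ρ β (e x) (u x) = s x * η x) :
    (fun x => gapDefect β ρ ξ (s x) (u x) (η x)) =O[l] fun x => s x ^ 4 := by
  simp only [← hse] at hgap
  have he : Tendsto (fun x => s x ^ 2) l (𝓝 0) := by
    simpa only [zero_pow two_ne_zero] using hs.pow 2
  refine (isBigO_momentGap_sub κ ξ ρ β he hu).congr' ?_ (.of_forall fun x => by ring)
  filter_upwards [hgap] with x hx
  rw [hx, gapDefect]
  ring

theorem boundedAlong_of_saddle_equation (hk : k ≠ 0) (hse : ∀ x, s x ^ 2 = e x)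
    (hs : Tendsto s l (𝓝 0)) (hu : BoundedAlong l u) (hs₀ : ∀ᶠ x in l, s x ≠ 0)
    (hgap : ∀ᶠ x in l, momentGap κ ξ ρ β (e x) (u x) = s x * η x)
    (hsaddle : ∀ᶠ x in l, k * momentGap κ ξ ρ β (e x) (u x) ^ 2 =
      e x * (m * deriv (riccatiA κ ξ ρ (e x)) (u x) * momentGap κ ξ ρ β (e x) (u x) ^ 2 -
        (V + m * momentGap κ ξ ρ β (e x) (u x)) * deriv (momentGap κ ξ ρ β (e x)) (u x))) :
    BoundedAlong l η := by
  simp only [← hse] at hgap hsaddle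
  have he : Tendsto (fun x => s x ^ 2) l (𝓝 0) := by
    simpa only [zero_pow two_ne_zero] using hs.pow 2
  have hH := boundedAlong_momentGap κ ξ ρ β he hu
  have hH' := boundedAlong_deriv_momentGap κ ξ ρ β he hu
  have hA' : BoundedAlong l fun x => deriv (riccatiA κ ξ ρ (s x ^ 2)) (u x) :=
    (isBigO_deriv_riccatiA κ ξ ρ he hu).trans (BoundedAlong.of_tendsto he)
  have hsq : BoundedAlong l fun x => η x ^ 2 := by
    have hrhs : BoundedAlong l fun x => (m * deriv (riccatiA κ ξ ρ (s x ^ 2)) (u x) *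
        momentGap κ ξ ρ β (s x ^ 2) (u x) ^ 2 - (V + m * momentGap κ ξ ρ β (s x ^ 2) (u x)) *
          deriv (momentGap κ ξ ρ β (s x ^ 2)) (u x)) / k := by fun_prop
    refine hrhs.congr' ?_
    filter_upwards [hs₀, hgap, hsaddle] with x hx hxgap hxsaddle
    rw [div_eq_iff hk, ← mul_right_inj' (pow_ne_zero 2 hx), ← hxsaddle, hxgap]
    ring
  exact IsBigO.of_pow two_ne_zero (hsq.congr_right fun _ => (one_pow 2).symm)

theorem isBigO_saddleDefect_of_saddle_equation (hse : ∀ x, s x ^ 2 = e x)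
    (hs : Tendsto s l (𝓝 0)) (hu : BoundedAlong l u) (hη : BoundedAlong l η)
    (hs₀ : ∀ᶠ x in l, s x ≠ 0)
    (hgap : ∀ᶠ x in l, momentGap κ ξ ρ β (e x) (u x) = s x * η x)
    (hsaddle : ∀ᶠ x in l, k * momentGap κ ξ ρ β (e x) (u x) ^ 2 =
      e x * (m * deriv (riccatiA κ ξ ρ (e x)) (u x) * momentGap κ ξ ρ β (e x) (u x) ^ 2 -
        (V + m * momentGap κ ξ ρ β (e x) (u x)) * deriv (momentGap κ ξ ρ β (e x)) (u x))) :
    (fun x => saddleDefect β V m k ρ ξ (s x) (u x) (η x)) =O[l] fun x => s x ^ 4 := by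
  simp only [← hse] at hgap hsaddle
  have he : Tendsto (fun x => s x ^ 2) l (𝓝 0) := by
    simpa only [zero_pow two_ne_zero] using hs.pow 2
  have hs' := BoundedAlong.of_tendsto hs
  have hweight : BoundedAlong l fun x => V + m * s x * η x := by fun_prop
  have hη' : BoundedAlong l fun x => m * η x ^ 2 := by fun_prop
  have hA' := hη'.mul_isBigO ((isBigO_refl (fun x => s x ^ 2) l).mul
    (isBigO_deriv_riccatiA κ ξ ρ he hu))
  refine ((hweight.mul_isBigO (isBigO_deriv_momentGap_add κ ξ ρ β he hu)).sub
    (hA'.congr_right fun x => ?_)).congr' ?_ (.of_forall fun x => ?_)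
  · exact (sq (s x ^ 2)).symm
  · filter_upwards [hs₀, hgap, hsaddle] with x hx hxgap hxsaddle
    rw [hxgap] at hxsaddle
    have hquot : k * η x ^ 2 = m * deriv (riccatiA κ ξ ρ (s x ^ 2)) (u x) * (s x * η x) ^ 2 -
        (V + m * (s x * η x)) * deriv (momentGap κ ξ ρ β (s x ^ 2)) (u x) := by
      rw [← mul_right_inj' (pow_ne_zero 2 hx), ← hxsaddle]
      ring
    rw [saddleDefect, hquot]
    ring
  · exact (pow_mul (s x) 2 2).symm

end RescaledGap

section Coefficients

variable {κ θ ξ v ρ t k : ℝ}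

theorem sgn'_mul_abs (k : ℝ) : sgn' k * |k| = k := by
  rw [sgn']
  split_ifs with hk
  · rw [abs_of_nonneg hk, one_mul]
  · rw [abs_of_neg (not_le.1 hk), neg_one_mul, neg_neg]

theorem sgn'_sq (k : ℝ) : sgn' k ^ 2 = 1 := by
  rw [sgn']
  split_ifs <;> norm_num

theorem betaT_mul_coefA0_sq (hβ : 0 < betaT κ ξ t) (θ v ρ k : ℝ) :
    betaT κ ξ t * coefA0 κ θ ξ v ρ t k ^ 2 = 1 := by
  rw [coefA0, div_pow, Real.sq_sqrt hβ.le, sgn'_sq, mul_one_div_cancel hβ.ne']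

theorem coefA0_ne_zero (hβ : 0 < betaT κ ξ t) : coefA0 κ θ ξ v ρ t k ≠ 0 :=
  (pow_ne_zero_iff two_ne_zero).1 (right_ne_zero_of_mul_eq_one (betaT_mul_coefA0_sq hβ θ v ρ k))

theorem mul_coefA0 (κ θ ξ v ρ t k : ℝ) :
    k * coefA0 κ θ ξ v ρ t k = |k| / √(betaT κ ξ t) := by
  rw [coefA0, ← mul_div_assoc]
  congr 1
  linear_combination |k| * sgn'_sq k - sgn' k * sgn'_mul_abs k

theorem mul_coefA0_pos (hβ : 0 < betaT κ ξ t) (hk : k ≠ 0) : 0 < k * coefA0 κ θ ξ v ρ t k := by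
  rw [mul_coefA0]
  positivity

theorem abs_mul_sqrt_betaT (hβ : 0 < betaT κ ξ t) (θ v ρ k : ℝ) :
    |k| * √(betaT κ ξ t) = k / coefA0 κ θ ξ v ρ t k := by
  have hdiv := mul_coefA0 κ θ ξ v ρ t k
  have hsq := betaT_mul_coefA0_sq hβ θ v ρ k
  have hsqrt := Real.sq_sqrt hβ.le
  rw [eq_div_iff (coefA0_ne_zero hβ)]
  rw [eq_div_iff (Real.sqrt_pos.2 hβ).ne'] at hdiv
  linear_combination -(√(betaT κ ξ t) * coefA0 κ θ ξ v ρ t k) * hdiv +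
    k * coefA0 κ θ ξ v ρ t k ^ 2 * hsqrt + k * hsq

theorem coefE0_eq (hβ : 0 < betaT κ ξ t) :
    coefE0 κ θ ξ v ρ t k =
      √v * Real.exp (-(κ * t) / 2) / (√|k| * betaT κ ξ t ^ ((1 : ℝ) / 4)) := by
  have ha₀ := coefA0_ne_zero (θ := θ) (v := v) (ρ := ρ) (k := k) hβ
  rw [coefE0, coefA1]
  field_simp

theorem coefE0_pos (hβ : 0 < betaT κ ξ t) (hv : 0 < v) (hk : k ≠ 0) :
    0 < coefE0 κ θ ξ v ρ t k := by
  rw [coefE0_eq hβ]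
  positivity

theorem mul_coefE0_sq (hβ : 0 < betaT κ ξ t) (hv : 0 ≤ v) (θ ρ : ℝ) (hk : k ≠ 0) :
    k * coefE0 κ θ ξ v ρ t k ^ 2 = v * Real.exp (-(κ * t)) * coefA0 κ θ ξ v ρ t k := by
  have hβ' : (betaT κ ξ t ^ ((1 : ℝ) / 4)) ^ 2 = √(betaT κ ξ t) := by
    rw [← Real.rpow_mul_natCast hβ.le, Real.sqrt_eq_rpow]
    norm_num
  have hexp : Real.exp (-(κ * t) / 2) ^ 2 = Real.exp (-(κ * t)) := by
    rw [← Real.exp_nat_mul]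
    congr 1
    push_cast
    ring
  have hsgn : k / |k| = sgn' k := by
    rw [div_eq_iff (abs_ne_zero.2 hk), sgn'_mul_abs]
  rw [coefE0_eq hβ, div_pow, mul_pow, mul_pow, Real.sq_sqrt hv, Real.sq_sqrt (abs_nonneg k), hβ',
    hexp, coefA0, ← hsgn]
  field_simp

theorem cirHalfNoncentrality_eq (hβ : 0 < betaT κ ξ t) (hv : 0 ≤ v) (θ ρ : ℝ) (hk : k ≠ 0) :
    cirHalfNoncentrality κ ξ v t =
      k * coefA0 κ θ ξ v ρ t k * coefE0 κ θ ξ v ρ t k ^ 2 / 2 := by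
  have hsq := mul_coefE0_sq hβ hv θ ρ hk
  have hβa := betaT_mul_coefA0_sq hβ θ v ρ k
  rw [cirHalfNoncentrality]
  field_simp
  linear_combination -(v * Real.exp (-(κ * t))) * hβa -
    betaT κ ξ t * coefA0 κ θ ξ v ρ t k * hsq

theorem coefA1_eq (hβ : 0 < betaT κ ξ t) :
    coefA1 κ θ ξ v ρ t k = -(coefA0 κ θ ξ v ρ t k * coefE0 κ θ ξ v ρ t k) / 2 := by
  have ha₀ := coefA0_ne_zero (θ := θ) (v := v) (ρ := ρ) (k := k) hβ
  rw [coefE0]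
  field_simp

theorem coefA2_eq (κ θ ξ v ρ t k : ℝ) :
    coefA2 κ θ ξ v ρ t k = -cirHalfDegree κ θ ξ / (2 * k) -
      B1hat ρ ξ (coefA0 κ θ ξ v ρ t k) / coefA0 κ θ ξ v ρ t k := by
  rw [coefA2, cirHalfDegree]
  congr 1
  field_simp

theorem coefR_eq (hβ : 0 < betaT κ ξ t) :
    coefR κ θ ξ v ρ t k = (coefA0 κ θ ξ v ρ t k * coefE0 κ θ ξ v ρ t k) ^ 2 / 8 -
      cirHalfDegree κ θ ξ * coefA0 κ θ ξ v ρ t k / (2 * k) := by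
  rw [coefR, mul_right_comm, abs_mul_sqrt_betaT hβ θ v ρ, coefA1_eq hβ, cirHalfDegree]
  field_simp
  ring

theorem coefA3_eq (hβ : 0 < betaT κ ξ t) (hξ : ξ ≠ 0) (hv : v ≠ 0) :
    coefA3 κ θ ξ v ρ t k = 2 * betaT κ ξ t * coefA1 κ θ ξ v ρ t k ^ 3 *
      ((k / coefA0 κ θ ξ v ρ t k * B1hat ρ ξ (coefA0 κ θ ξ v ρ t k) -
          k * B1hat' ρ ξ (coefA0 κ θ ξ v ρ t k) - cirHalfDegree κ θ ξ / 2) /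
          (2 * cirHalfNoncentrality κ ξ v t) +
        (cirHalfDegree κ θ ξ / (2 * cirHalfNoncentrality κ ξ v t)) ^ 2 - 1 / 16) := by
  have hβ' := hβ.ne'
  rw [coefA3, mul_right_comm |k|, abs_mul_sqrt_betaT hβ θ v ρ, cirHalfDegree, cirHalfNoncentrality,
    Real.exp_neg]
  field_simp

theorem coefE1_eq (hβ : 0 < betaT κ ξ t) :
    coefE1 κ θ ξ v ρ t k = cirHalfDegree κ θ ξ / (k * coefA0 κ θ ξ v ρ t k) -
      coefE0 κ θ ξ v ρ t k ^ 2 / 4 := by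
  have ha₀ := coefA0_ne_zero (θ := θ) (v := v) (ρ := ρ) (k := k) hβ
  rw [coefE1, coefR_eq hβ, eq_one_div_of_mul_eq_one_left (betaT_mul_coefA0_sq hβ θ v ρ k)]
  field_simp
  ring

theorem isSaddleExpansion_coef (hβ : 0 < betaT κ ξ t) (hξ : ξ ≠ 0) (hv : 0 < v) (hk : k ≠ 0) :
    IsSaddleExpansion (betaT κ ξ t) (cirHalfNoncentrality κ ξ v t) (cirHalfDegree κ θ ξ) k ρ ξ
      (coefA0 κ θ ξ v ρ t k) (coefA1 κ θ ξ v ρ t k) (coefA2 κ θ ξ v ρ t k)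
      (coefA3 κ θ ξ v ρ t k) (coefE0 κ θ ξ v ρ t k) (coefE1 κ θ ξ v ρ t k)
      (coefE2 κ θ ξ v ρ t k) := by
  have hβa := eq_one_div_of_mul_eq_one_left (betaT_mul_coefA0_sq hβ θ v ρ k)
  have hV := cirHalfNoncentrality_eq hβ hv.le θ ρ hk
  have ha₀ := coefA0_ne_zero (θ := θ) (v := v) (ρ := ρ) (k := k) hβ
  have he₀ := (coefE0_pos (θ := θ) (ρ := ρ) hβ hv hk).ne'
  constructor
  · rw [hV, hβa]
    field_simp
  · rw [hV, coefE1_eq hβ, coefA1_eq hβ, hβa]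
    field_simp
    ring
  · rw [coefE2, coefE1_eq hβ, coefA3_eq hβ hξ hv.ne', coefA2_eq, coefA1_eq hβ, hV, hβa]
    field_simp
    ring
  · exact betaT_mul_coefA0_sq hβ θ v ρ k
  · rw [coefA1_eq hβ, hβa]
    field_simp
  · rw [coefE1_eq hβ, coefA2_eq, coefA1_eq hβ, hβa]
    field_simp
    ring
  · rw [coefE2]
    ring

theorem coefC0_eq (hβ : 0 < betaT κ ξ t) (hv : 0 < v) (hk : k ≠ 0) :
    coefC0 κ θ ξ v ρ t k =
      cirHalfNoncentrality κ ξ v t / coefE0 κ θ ξ v ρ t k - k * coefA1 κ θ ξ v ρ t k := by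
  have he₀ := coefE0_pos (θ := θ) (ρ := ρ) hβ hv hk
  have hpos := mul_pos (mul_coefA0_pos (θ := θ) (v := v) (ρ := ρ) hβ hk) he₀
  have hprod : coefA1 κ θ ξ v ρ t k * k =
      -(k * coefA0 κ θ ξ v ρ t k * coefE0 κ θ ξ v ρ t k / 2) := by
    rw [coefA1_eq hβ]
    ring
  rw [coefC0, mul_comm k, hprod, abs_neg, abs_of_pos (half_pos hpos),
    cirHalfNoncentrality_eq hβ hv.le θ ρ hk]
  field_simp
  ring

theorem coefC1_eq (hβ : 0 < betaT κ ξ t) (hv : 0 < v) (hk : k ≠ 0) :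
    coefC1 κ θ ξ v ρ t k = -(k * coefA2 κ θ ξ v ρ t k) -
      cirHalfNoncentrality κ ξ v t * coefE1 κ θ ξ v ρ t k / coefE0 κ θ ξ v ρ t k ^ 2 -
      cirHalfNoncentrality κ ξ v t := by
  have hβa := betaT_mul_coefA0_sq hβ θ v ρ k
  have he₀ := (coefE0_pos (θ := θ) (ρ := ρ) hβ hv hk).ne'
  rw [coefC1, coefA1_eq hβ, cirHalfNoncentrality]
  field_simp
  linear_combination -(v * Real.exp (-(κ * t)) * coefE0 κ θ ξ v ρ t k ^ 2) * hβa

theorem coefZ1_eq (hβ : 0 < betaT κ ξ t) (hv : 0 < v) (hk : k ≠ 0) :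
    coefZ1 κ θ ξ v ρ t k = -(k * coefA3 κ θ ξ v ρ t k) +
      cirHalfNoncentrality κ ξ v t *
        ((coefE1 κ θ ξ v ρ t k ^ 2 - coefE0 κ θ ξ v ρ t k * coefE2 κ θ ξ v ρ t k) /
          coefE0 κ θ ξ v ρ t k ^ 3) -
      cirHalfDegree κ θ ξ * (coefE1 κ θ ξ v ρ t k / coefE0 κ θ ξ v ρ t k) := by
  have hβa := betaT_mul_coefA0_sq hβ θ v ρ k
  have he₀ := (coefE0_pos (θ := θ) (ρ := ρ) hβ hv hk).ne'
  have hR : coefA0 κ θ ξ v ρ t k * coefA1 κ θ ξ v ρ t k * coefE1 κ θ ξ v ρ t k =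
      coefE0 κ θ ξ v ρ t k * coefR κ θ ξ v ρ t k := by
    rw [coefE1, coefA1_eq hβ]
    linear_combination coefE0 κ θ ξ v ρ t k * coefR κ θ ξ v ρ t k * hβa
  rw [coefZ1, coefPsi4, cirHalfDegree, cirHalfNoncentrality]
  field_simp
  linear_combination -(2 * betaT κ ξ t * v * Real.exp (-(κ * t)) * coefE0 κ θ ξ v ρ t k) * hR

end Coefficients

section SaddleExpansion

theorem IsSaddleExpansion.tendsto {α : Type*} {β V m k ρ ξ a₀ a₁ a₂ a₃ e₀ e₁ e₂ : ℝ}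
    {l : Filter α} {s u η : α → ℝ} (h : IsSaddleExpansion β V m k ρ ξ a₀ a₁ a₂ a₃ e₀ e₁ e₂)
    (hw : 0 < 2 * β * V) (hk : k ≠ 0) (hak : 0 ≤ k * a₀) (he₀ : 0 ≤ e₀) (hs : Tendsto s l (𝓝 0))
    (hu : BoundedAlong l u) (hη : BoundedAlong l η) (hη₀ : ∀ᶠ x in l, 0 ≤ η x)
    (hsaddle : Tendsto (fun x => saddleDefect β V m k ρ ξ (s x) (u x) (η x)) l (𝓝 0))
    (hgap : Tendsto (fun x => gapDefect β ρ ξ (s x) (u x) (η x)) l (𝓝 0)) :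
    Tendsto u l (𝓝 a₀) ∧ Tendsto η l (𝓝 e₀) := by
  have hsaddle' := tendsto_sub_of_saddleDefect hs hu hη hsaddle
  have hua := tendsto_of_saddleDefect hw hk hak
    (tendsto_sq_of_gapDefect hs hu hη h.gap_zero hgap) hsaddle'
  exact ⟨hua, tendsto_gap_of_saddleDefect hk he₀ h.saddle_zero hua hη₀ hsaddle'⟩

variable {κ θ ξ v ρ t k : ℝ} {u : ℝ → ℝ}

theorem tendsto_sqrt_sqrt_nhdsGT_zero : Tendsto (fun τ => √√τ) (𝓝[>] 0) (𝓝 0) := by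
  simpa only [Real.sqrt_zero] using tendsto_sqrt_nhdsGT_zero.sqrt

theorem IsForwardSaddle.isBigO_sub (hκ : κ ≠ 0) (hθ : θ ≠ 0) (hξ : ξ ≠ 0) (hv : 0 < v)
    (ht : 0 < t) (hk : k ≠ 0) (hu : ∀ᶠ τ in 𝓝[>] 0, IsForwardSaddle κ θ ξ v ρ t k τ (u τ)) :
    ((fun τ => u τ - (coefA0 κ θ ξ v ρ t k + coefA1 κ θ ξ v ρ t k * √√τ +
        coefA2 κ θ ξ v ρ t k * √√τ ^ 2 + coefA3 κ θ ξ v ρ t k * √√τ ^ 3))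
      =O[𝓝[>] 0] fun τ => √√τ ^ 4) ∧
    (fun τ => momentGap κ ξ ρ (betaT κ ξ t) √τ (u τ) / √√τ - (coefE0 κ θ ξ v ρ t k +
        coefE1 κ θ ξ v ρ t k * √√τ + coefE2 κ θ ξ v ρ t k * √√τ ^ 2))
      =O[𝓝[>] 0] fun τ => √√τ ^ 3 := by
  have hβ := betaT_pos hκ hξ ht
  have hw : 0 < 2 * betaT κ ξ t * cirHalfNoncentrality κ ξ v t := by
    rw [cirHalfNoncentrality]
    positivity
  have hs := tendsto_sqrt_sqrt_nhdsGT_zero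
  have hs₀ : ∀ᶠ τ : ℝ in 𝓝[>] 0, 0 < √√τ :=
    eventually_mem_nhdsWithin.mono fun τ hτ => Real.sqrt_pos.2 (Real.sqrt_pos.2 hτ)
  have hs₀' := hs₀.mono fun τ hτ => hτ.ne'
  have hsqrt (τ : ℝ) : √√τ ^ 2 = √τ := Real.sq_sqrt (Real.sqrt_nonneg τ)
  have hbdd := IsForwardSaddle.boundedAlong hκ hθ hξ ht hu
  have hH : ∀ᶠ τ in 𝓝[>] 0, momentGap κ ξ ρ (betaT κ ξ t) √τ (u τ) =
      √√τ * (momentGap κ ξ ρ (betaT κ ξ t) √τ (u τ) / √√τ) := by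
    filter_upwards [hs₀'] with τ hτ
    rw [mul_div_cancel₀ _ hτ]
  have heq := IsForwardSaddle.eventually_saddle_equation hκ hθ hξ ht hk hu
  have hη := boundedAlong_of_saddle_equation hk hsqrt hs hbdd hs₀' hH heq
  have hη₀ : ∀ᶠ τ in 𝓝[>] 0, 0 ≤ momentGap κ ξ ρ (betaT κ ξ t) √τ (u τ) / √√τ := by
    filter_upwards [IsForwardSaddle.eventually_momentGap_pos hκ hθ hξ ht hu] with τ hτ
    positivity
  have hgap := isBigO_gapDefect_of_momentGap hsqrt hs hbdd hH
  have hsaddle := isBigO_saddleDefect_of_saddle_equation hsqrt hs hbdd hη hs₀' hH heq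
  have hs₄ : Tendsto (fun τ : ℝ => √√τ ^ 4) (𝓝[>] 0) (𝓝 0) := by
    simpa only [zero_pow four_ne_zero] using hs.pow 4
  have hexp := isSaddleExpansion_coef (θ := θ) (ρ := ρ) hβ hξ hv hk
  have he₀ := coefE0_pos (θ := θ) (ρ := ρ) hβ hv hk
  obtain ⟨hulim, hηlim⟩ := hexp.tendsto hw hk (mul_coefA0_pos hβ hk).le he₀.le hs hbdd hη hη₀
    (hsaddle.trans_tendsto hs₄) (hgap.trans_tendsto hs₄)
  exact hexp.isBigO_sub hk he₀.ne' hs hulim hηlim (hsaddle.trans (isBigO_pow_succ hs 3)) hgap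

end SaddleExpansion

section Exponent

variable {α : Type*} {l : Filter α}

theorem isBigO_sub_of_saddle_expansion {V m k a₀ a₁ a₂ a₃ e₀ e₁ e₂ : ℝ} {s u η A : α → ℝ}
    (he₀ : 0 < e₀) (hs : Tendsto s l (𝓝 0)) (hs₀ : ∀ᶠ x in l, 0 < s x)
    (hA : A =O[l] fun x => s x ^ 2)
    (hu : (fun x => u x - (a₀ + a₁ * s x + a₂ * s x ^ 2 + a₃ * s x ^ 3)) =O[l] fun x => s x ^ 4)
    (hη : (fun x => η x - (e₀ + e₁ * s x + e₂ * s x ^ 2)) =O[l] fun x => s x ^ 3) :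
    (fun x => -(k * u x) / s x ^ 2 +
        (m * A x + V * (1 / (s x * η x) - 1) - m * Real.log (s x * η x)) -
      (-(k * a₀) / s x ^ 2 + (V / e₀ - k * a₁) / s x + (-(k * a₂) - V * e₁ / e₀ ^ 2 - V) -
        m * Real.log (s x) - m * Real.log e₀ +
        (-(k * a₃) + V * ((e₁ ^ 2 - e₀ * e₂) / e₀ ^ 3) - m * (e₁ / e₀)) * s x))
      =O[l] fun x => s x ^ 2 := by
  have hinv := isBigO_inv_sub_quadratic he₀.ne' hs hη
  have hη₁ : (fun x => η x - (e₀ + e₁ * s x)) =O[l] fun x => s x ^ 2 := by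
    refine ((hη.trans (isBigO_pow_succ hs 2)).add
      ((isBigO_refl (fun x => s x ^ 2) l).const_mul_left e₂)).congr_left fun x => ?_
    ring
  have hη₀ := (tendsto_of_isBigO_sub_quadratic hs hη).eventually_const_lt he₀
  have hlog := isBigO_comp_sub_linear (Real.contDiffAt_log.2 he₀.ne').analyticAt hs hη₁
  rw [Real.deriv_log] at hlog
  have hu' : (fun x => (u x - (a₀ + a₁ * s x + a₂ * s x ^ 2 + a₃ * s x ^ 3)) * (s x ^ 2)⁻¹)
      =O[l] fun x => s x ^ 2 := by
    refine (hu.mul (isBigO_refl (fun x => (s x ^ 2)⁻¹) l)).congr' .rfl (hs₀.mono fun x hx => ?_)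
    field_simp
  have hinv' : (fun x => ((η x)⁻¹ -
      (1 / e₀ - e₁ / e₀ ^ 2 * s x + (e₁ ^ 2 - e₀ * e₂) / e₀ ^ 3 * s x ^ 2)) * (s x)⁻¹)
      =O[l] fun x => s x ^ 2 := by
    refine (hinv.mul (isBigO_refl (fun x => (s x)⁻¹) l)).congr' .rfl (hs₀.mono fun x hx => ?_)
    field_simp
  refine ((((hA.const_mul_left m).sub (hu'.const_mul_left k)).add (hinv'.const_mul_left V)).sub
    (hlog.const_mul_left m)).congr' ?_ .rfl
  filter_upwards [hs₀, hη₀] with x hx hηx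
  rw [Real.log_mul hx.ne' hηx.ne']
  field_simp
  ring

theorem isBigO_exp_sub_sub {M L s : α → ℝ} {z : ℝ} (hs : Tendsto s l (𝓝 0))
    (hL : (fun x => L x - (M x + z * s x)) =O[l] fun x => s x ^ 2) :
    (fun x => Real.exp (L x - M x) - 1 - z * s x) =O[l] fun x => s x ^ 2 := by
  have hexp := isBigO_comp_sub_linear (a := 0) (b := z) (η := fun x => L x - M x)
    analyticAt_rexp hs (hL.congr_left fun x => by ring)
  refine hexp.congr_left fun x => ?_
  rw [Real.deriv_exp, Real.exp_zero]
  ring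

end Exponent

section SharpAsymptotics

variable {κ θ ξ v ρ t k : ℝ} {u : ℝ → ℝ}

/-- The exponent of the zeroth-order factor of the expansion of `exp ((Λ_τ(u*_τ) - k u*_τ) / √τ)`,
the powers of `τ` and of `e₀` included. -/
def leadingExponent (κ θ ξ v ρ t k τ : ℝ) : ℝ :=
  -(|k| / √(betaT κ ξ t)) / √τ + coefC0 κ θ ξ v ρ t k / τ ^ ((1 : ℝ) / 4) + coefC1 κ θ ξ v ρ t k -
    cirHalfDegree κ θ ξ * Real.log (τ ^ ((1 : ℝ) / 4)) -
    cirHalfDegree κ θ ξ * Real.log (coefE0 κ θ ξ v ρ t k)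

theorem sqrt_sqrt_eq_rpow {τ : ℝ} (hτ : 0 ≤ τ) : √√τ = τ ^ ((1 : ℝ) / 4) := by
  rw [Real.sqrt_eq_rpow, Real.sqrt_eq_rpow, ← Real.rpow_mul hτ]
  norm_num

theorem IsForwardSaddle.isBigO_exponent_sub (hκ : κ ≠ 0) (hθ : θ ≠ 0) (hξ : ξ ≠ 0) (hv : 0 < v)
    (ht : 0 < t) (hk : k ≠ 0) (hu : ∀ᶠ τ in 𝓝[>] 0, IsForwardSaddle κ θ ξ v ρ t k τ (u τ)) :
    (fun τ => -(k * u τ) / √τ + regularG κ θ ξ v ρ t √τ (u τ) -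
      (leadingExponent κ θ ξ v ρ t k τ + coefZ1 κ θ ξ v ρ t k * √√τ))
      =O[𝓝[>] 0] fun τ => √√τ ^ 2 := by
  have hβ := betaT_pos hκ hξ ht
  have hs := tendsto_sqrt_sqrt_nhdsGT_zero
  have hs₀ : ∀ᶠ τ : ℝ in 𝓝[>] 0, 0 < √√τ :=
    eventually_mem_nhdsWithin.mono fun τ hτ => Real.sqrt_pos.2 (Real.sqrt_pos.2 hτ)
  have hsqrt (τ : ℝ) : √√τ ^ 2 = √τ := Real.sq_sqrt (Real.sqrt_nonneg τ)
  have hA := isBigO_riccatiA κ ξ ρ tendsto_sqrt_nhdsGT_zero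
    (IsForwardSaddle.boundedAlong hκ hθ hξ ht hu)
  obtain ⟨hua, hηe⟩ := IsForwardSaddle.isBigO_sub hκ hθ hξ hv ht hk hu
  refine (isBigO_sub_of_saddle_expansion (V := cirHalfNoncentrality κ ξ v t)
    (m := cirHalfDegree κ θ ξ) (k := k) (coefE0_pos hβ hv hk) hs hs₀
    (hA.congr_right fun τ => (hsqrt τ).symm) hua hηe).congr' ?_ .rfl
  filter_upwards [eventually_mem_nhdsWithin, hs₀] with τ hτ hτ₀
  rw [← coefC0_eq hβ hv hk, ← coefC1_eq hβ hv hk, ← coefZ1_eq hβ hv hk, hsqrt, mul_coefA0,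
    mul_div_cancel₀ _ hτ₀.ne', regularG, leadingExponent, ← sqrt_sqrt_eq_rpow (le_of_lt hτ)]

theorem exp_leadingExponent {τ : ℝ} (hβ : 0 < betaT κ ξ t) (hv : 0 < v) (hk : k ≠ 0)
    (hτ : 0 < τ) :
    Real.exp (leadingExponent κ θ ξ v ρ t k τ) =
      Real.exp (-(|k| / √(betaT κ ξ t)) / √τ + coefC0 κ θ ξ v ρ t k / τ ^ ((1 : ℝ) / 4) +
        coefC1 κ θ ξ v ρ t k) * τ ^ (-(κ * θ / (2 * ξ ^ 2))) * coefC2 κ θ ξ v ρ t k := by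
  rw [coefC2, Real.rpow_def_of_pos hτ (-(κ * θ / (2 * ξ ^ 2))),
    Real.rpow_def_of_pos (coefE0_pos hβ hv hk), ← Real.exp_add, ← Real.exp_add, leadingExponent,
    Real.log_rpow hτ, cirHalfDegree]
  congr 1
  ring

theorem stmt16_general (hκ : κ ≠ 0) (hθ : θ ≠ 0) (hξ : ξ ≠ 0) (hv : 0 < v) (ht : 0 < t)
    (hk : k ≠ 0) (hu : ∀ᶠ τ in 𝓝[>] 0, IsForwardSaddle κ θ ξ v ρ t k τ (u τ)) :
    ∃ err : ℝ → ℂ, err =O[𝓝[>] (0 : ℝ)] (fun τ : ℝ => τ ^ ((1 : ℝ) / 2)) ∧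
      ∀ᶠ τ in 𝓝[>] (0 : ℝ),
        Complex.exp (((-(k * u τ) / √τ : ℝ) : ℂ) +
            hestLambda κ θ ξ v ρ t τ (u τ) / ((√τ : ℝ) : ℂ)) =
          Complex.exp (((-(|k| / √(betaT κ ξ t)) / √τ +
              coefC0 κ θ ξ v ρ t k / τ ^ ((1 : ℝ) / 4) + coefC1 κ θ ξ v ρ t k : ℝ) : ℂ)) *
            ((τ ^ (-(κ * θ / (2 * ξ ^ 2))) : ℝ) : ℂ) * ((coefC2 κ θ ξ v ρ t k : ℝ) : ℂ) *
            (1 + ((coefZ1 κ θ ξ v ρ t k : ℝ) : ℂ) * ((τ ^ ((1 : ℝ) / 4) : ℝ) : ℂ) + err τ) := by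
  have herr := isBigO_exp_sub_sub tendsto_sqrt_sqrt_nhdsGT_zero
    (IsForwardSaddle.isBigO_exponent_sub hκ hθ hξ hv ht hk hu)
  refine ⟨_, (Complex.isBigO_ofReal_left.2 herr).congr_right fun τ => ?_, ?_⟩
  · rw [Real.sq_sqrt (Real.sqrt_nonneg τ), Real.sqrt_eq_rpow]
  filter_upwards [eventually_mem_nhdsWithin,
    IsForwardSaddle.eventually_hestLambda_eq hκ hθ hξ ht hk hu] with τ hτ hΛ
  have hτ' : 0 < √τ := Real.sqrt_pos.2 hτ
  rw [hΛ, ← sqrt_sqrt_eq_rpow (le_of_lt hτ)]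
  norm_cast
  rw [mul_div_cancel_left₀ _ hτ'.ne', sqrt_sqrt_eq_rpow (le_of_lt hτ),
    ← exp_leadingExponent (betaT_pos hκ hξ ht) hv hk hτ, sub_sub, add_sub_cancel, ← Real.exp_add,
    add_sub_cancel]

end SharpAsymptotics

theorem stmt16 (κ θ ξ v ρ t : ℝ) (hκ : 0 < κ) (hθ : 0 < θ) (hξ : 0 < ξ)
    (hv : 0 < v) (hρ : ρ ∈ Set.Ioo (-1 : ℝ) 1) (ht : 0 < t)
    (k : ℝ) (hk : k ≠ 0) (ustar : ℝ → ℝ)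
    (hustar : ∀ᶠ τ in 𝓝[>] (0 : ℝ), ustar τ ∈ hestDom κ θ ξ v ρ t τ ∧
      deriv (hestLambda κ θ ξ v ρ t τ) (ustar τ) = (k : ℂ)) :
    ∃ err : ℝ → ℂ, err =O[𝓝[>] (0 : ℝ)] (fun τ : ℝ => τ ^ ((1 : ℝ) / 2)) ∧
      ∀ᶠ τ in 𝓝[>] (0 : ℝ),
        Complex.exp (((-(k * ustar τ) / Real.sqrt τ : ℝ) : ℂ) +
            hestLambda κ θ ξ v ρ t τ (ustar τ) / ((Real.sqrt τ : ℝ) : ℂ)) =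
          Complex.exp (((-(|k| / Real.sqrt (betaT κ ξ t)) / Real.sqrt τ +
              coefC0 κ θ ξ v ρ t k / τ ^ ((1 : ℝ) / 4) + coefC1 κ θ ξ v ρ t k : ℝ) : ℂ)) *
            ((τ ^ (-(κ * θ / (2 * ξ ^ 2))) : ℝ) : ℂ) * ((coefC2 κ θ ξ v ρ t k : ℝ) : ℂ) *
            (1 + ((coefZ1 κ θ ξ v ρ t k : ℝ) : ℂ) * ((τ ^ ((1 : ℝ) / 4) : ℝ) : ℂ) + err τ) :=
  stmt16_general hκ.ne' hθ.ne' hξ.ne' hv ht hk hustar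

end
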